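/- Let r ∈ ℕ with r ≥ 2 or r = ∞, and let f be a volume-preserving C^r diffeomorphism of T², isotopic to the identity, regularly semi-conjugate to T_ω̄ with ω̄ totally irrational and super-Liouvillean. If g is a volume-preserving C^{r−1} diffeomorphism of T², isotopic to the identity, commuting with f and with rotation vector ρ(g) = 0 in ℝ²/ℤ², then g = Id_{T²}. -/

import Mathlib

open Filter Topology MeasureTheory

noncomputable section

/-- The plane ℝ². -/
abbrev R2 : Type := ℝ × ℝ

/-- The Euclidean norm on ℝ². -/
def enorm2 (v : R2) : ℝ := Real.sqrt (v.1 ^ 2 + v.2 ^ 2)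

/-- The two-torus 𝕋² = ℝ²/ℤ². -/
abbrev T2 : Type := AddCircle (1 : ℝ) × AddCircle (1 : ℝ)

/-- The covering projection π : ℝ² → 𝕋². -/
def pr2 (v : R2) : T2 := ((v.1 : AddCircle (1 : ℝ)), (v.2 : AddCircle (1 : ℝ)))

/-- The integer vector (v₁, v₂) regarded as a point of ℝ². -/
def intVec (v : ℤ × ℤ) : R2 := ((v.1 : ℝ), (v.2 : ℝ))

/-- The distance on 𝕋² induced by the Euclidean metric on ℝ². -/
def distT2 (x y : T2) : ℝ :=
  sInf {r | ∃ a b : R2, pr2 a = x ∧ pr2 b = y ∧ r = enorm2 (a - b)}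

/-- The C⁰ distance between two maps of 𝕋². -/
def dC0 (f g : T2 → T2) : ℝ := ⨆ x : T2, distT2 (f x) (g x)

/-- `F : ℝ² → ℝ²` is a lift of `f : 𝕋² → 𝕋²`, i.e. π ∘ F = f ∘ π. -/
def IsLift (F : R2 → R2) (f : T2 → T2) : Prop := ∀ z : R2, pr2 (F z) = f (pr2 z)

/-- `F` commutes with the deck transformations of π : ℝ² → 𝕋². -/
def Equivariant (F : R2 → R2) : Prop :=
  ∀ (z : R2) (v : ℤ × ℤ), F (z + intVec v) = F z + intVec v

/-- `f` is a homeomorphism of 𝕋² isotopic to the identity (equivalently, admitting an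
equivariant lift to ℝ²). -/
def IsotopicToId (f : T2 → T2) : Prop :=
  IsHomeomorph f ∧ ∃ F : R2 → R2, IsHomeomorph F ∧ IsLift F f ∧ Equivariant F

/-- The Misiurewicz–Ziemian rotation set of a lift `F`. -/
def rotSet (F : R2 → R2) : Set R2 :=
  {v | ∃ (z : ℕ → R2) (n : ℕ → ℕ), Tendsto n atTop atTop ∧
      Tendsto (fun i => ((n i : ℝ))⁻¹ • (F^[n i] (z i) - z i)) atTop (𝓝 v)}

/-- Bounded mean motion, with bound κ, for a lift `F` with rotation vector `ω`:
‖Fⁿ(z) − z − nω‖ ≤ κ for all z and n. -/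
def BoundedMeanMotion (F : R2 → R2) (ω : R2) (κ : ℝ) : Prop :=
  ∀ (z : R2) (n : ℕ), enorm2 (F^[n] z - z - (n : ℝ) • ω) ≤ κ

/-- The standard scalar product on ℝ². -/
def inner2 (u v : R2) : ℝ := u.1 * v.1 + u.2 * v.2

/-- v^⊥ = (−v₂, v₁)/‖v‖. -/
def perp2 (v : R2) : R2 := (-v.2 / enorm2 v, v.1 / enorm2 v)

/-- Bounded deviation parallel to `v`, with bound κ, for a lift `F` with rotation vector `ω`:
|⟨Fⁿ(z) − z − nω, v^⊥⟩| ≤ κ for all z and n. -/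
def BoundedDeviation (F : R2 → R2) (ω : R2) (v : R2) (κ : ℝ) : Prop :=
  ∀ (z : R2) (n : ℕ), |inner2 (F^[n] z - z - (n : ℝ) • ω) (perp2 v)| ≤ κ

/-- ‖ω‖_{𝕋²} = min over integer vectors z of ‖ω − z‖. -/
def normT2 (ω : R2) : ℝ := ⨅ v : ℤ × ℤ, enorm2 (ω - intVec v)

/-- The super-Liouvillean condition: liminf_{n→∞} n⁻¹ ln ‖nω‖_{𝕋²} = −∞. -/
def SuperLiouville (ω : R2) : Prop :=
  ∀ M : ℝ, ∃ᶠ n : ℕ in atTop, (n : ℝ)⁻¹ * Real.log (normT2 ((n : ℝ) • ω)) < M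

/-- The strong super-Liouvillean condition: liminf_{n→∞} n⁻¹ aⁿ ln ‖nω‖_{𝕋²} = −∞. -/
def StrongSuperLiouville (a : ℝ) (ω : R2) : Prop :=
  ∀ M : ℝ, ∃ᶠ n : ℕ in atTop, (n : ℝ)⁻¹ * a ^ n * Real.log (normT2 ((n : ℝ) • ω)) < M

/-- ω ∈ ℝ² is irrational if ω ∉ ℚ². -/
def IrrationalVec (ω : R2) : Prop := ¬ ∃ q : ℚ × ℚ, ω = ((q.1 : ℝ), (q.2 : ℝ))

/-- ω is totally irrational if ω₁, ω₂, 1 are rationally independent. -/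
def TotallyIrrationalVec (ω : R2) : Prop :=
  ∀ d1 d2 e : ℤ, (d1 : ℝ) * ω.1 + (d2 : ℝ) * ω.2 + (e : ℝ) = 0 → d1 = 0 ∧ d2 = 0 ∧ e = 0

/-- ω is semi-irrational: irrational but not totally irrational. -/
def SemiIrrationalVec (ω : R2) : Prop := IrrationalVec ω ∧ ¬ TotallyIrrationalVec ω

/-- `v` is a character vector of the semi-irrational vector ω. -/
def IsCharacterVector (ω : R2) (v : R2) : Prop :=
  ∃ c d : ℤ, Int.gcd c d = 1 ∧ (∃ e : ℚ, (c : ℝ) * ω.1 + (d : ℝ) * ω.2 + (e : ℝ) = 0) ∧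
    v = ((d : ℝ), (-c : ℝ))

/-- `f` is Hölder continuous with exponent `a`. -/
def HolderMap (a : ℝ) (f : T2 → T2) : Prop :=
  ∃ C : ℝ, ∀ x y : T2, distT2 (f x) (f y) ≤ C * distT2 x y ^ a

/-- C⁰-rigidity: liminf_{n→∞} d_{C⁰}(fⁿ, Id) = 0. -/
def C0Rigid (f : T2 → T2) : Prop :=
  ∀ ε : ℝ, 0 < ε → ∃ᶠ n : ℕ in atTop, dC0 (f^[n]) id < ε

/-- `f` is a C^r diffeomorphism of 𝕋², expressed via a C^r lift with a C^r inverse. -/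
def IsCrDiffeo (r : ℕ∞) (f : T2 → T2) : Prop :=
  ∃ F G : R2 → R2, IsLift F f ∧ Function.LeftInverse G F ∧ Function.RightInverse G F ∧
    ContDiff ℝ r F ∧ ContDiff ℝ r G

/-- C^k-rigidity: some sequence of iterates f^{n_j}, n_j → ∞, converges to the identity in the
C^k topology, i.e. admits lifts converging to the identity uniformly together with all
derivatives of order ≤ k. -/
def CkRigid (k : ℕ∞) (f : T2 → T2) : Prop :=
  ∃ n : ℕ → ℕ, Tendsto n atTop atTop ∧
    ∃ F : ℕ → R2 → R2, (∀ j, IsLift (F j) (f^[n j])) ∧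
      ∀ i : ℕ, (i : ℕ∞) ≤ k →
        Tendsto (fun j => ⨆ z : R2, ‖iteratedFDeriv ℝ i (fun w => F j w - w) z‖)
          atTop (𝓝 0)

/-- ‖x‖_𝕋 : the distance from x ∈ ℝ to the nearest integer. -/
def dT (x : ℝ) : ℝ := |x - round x|

/-- `q` is the sequence of denominators of the best rational approximations of β. -/
def BestDenomSeq (β : ℝ) (q : ℕ → ℕ) : Prop :=
  q 0 = 1 ∧ ∀ n : ℕ,
    q n < q (n + 1) ∧
    (∀ m : ℕ, 1 ≤ m → m < q (n + 1) → dT ((q n : ℝ) * β) ≤ dT ((m : ℝ) * β)) ∧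
    dT ((q n : ℝ) * β) < 1 / (q (n + 1) : ℝ)

/-- β is of non-Brjuno type: Σ_n (ln q_{n+1})/q_n = ∞. -/
def NonBrjunoNum (β : ℝ) : Prop :=
  ∀ q : ℕ → ℕ, BestDenomSeq β q → ¬ Summable fun n => Real.log (q (n + 1) : ℝ) / (q n : ℝ)

/-- Character data of a semi-irrational vector ω: (c,d) ∈ ℤ² with gcd(c,d)=1 and
e = p/q ∈ ℚ in lowest terms with q > 0 such that c ω₁ + d ω₂ + p/q = 0. -/
def IsCharData (ω : R2) (c d p q : ℤ) : Prop :=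
  Int.gcd c d = 1 ∧ Int.gcd p q = 1 ∧ 0 < q ∧
    (c : ℝ) * ω.1 + (d : ℝ) * ω.2 + (p : ℝ) / (q : ℝ) = 0

/-- ω is of strong non-Brjuno type: its character frequency 𝓕(ω̄) is of non-Brjuno type. -/
def StrongNonBrjuno (ω : R2) : Prop :=
  ∃ c d p q a b : ℤ, IsCharData ω c d p q ∧ a * d - b * c = 1 ∧
    NonBrjunoNum (dT ((q : ℝ) * ((a : ℝ) * ω.1 + (b : ℝ) * ω.2)))

/-- The linear action of the integer matrix [[a,b],[c,d]] on ℝ². -/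
def AactZ (a b c d : ℤ) (z : R2) : R2 :=
  ((a : ℝ) * z.1 + (b : ℝ) * z.2, (c : ℝ) * z.1 + (d : ℝ) * z.2)

/-- The operator norm (w.r.t. the Euclidean norm) of the matrix [[a,b],[c,d]]. -/
def AOpNormZ (a b c d : ℤ) : ℝ :=
  sSup {r | ∃ u : R2, enorm2 u ≤ 1 ∧
    r = enorm2 ((a : ℝ) * u.1 + (b : ℝ) * u.2, (c : ℝ) * u.1 + (d : ℝ) * u.2)}

/-- Membership in the class 𝒞_{κ,ω̄}: pseudo-rotations with rotation vector ω̄ mod ℤ²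
having bounded mean motion with bound κ. -/
def MemC (κ : ℝ) (w : T2) (f : T2 → T2) : Prop :=
  IsotopicToId f ∧ ∃ (F : R2 → R2) (ω : R2),
    IsLift F f ∧ rotSet F = {ω} ∧ pr2 ω = w ∧ BoundedMeanMotion F ω κ

/-- Membership in the class 𝒟_{κ,ω̄,v}: pseudo-rotations with rotation vector ω̄ mod ℤ²
having bounded deviation parallel to v with bound κ. -/
def MemD (κ : ℝ) (w : T2) (v : R2) (f : T2 → T2) : Prop :=
  IsotopicToId f ∧ ∃ (F : R2 → R2) (ω : R2),
    IsLift F f ∧ rotSet F = {ω} ∧ pr2 ω = w ∧ BoundedDeviation F ω v κ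

/-- `h : 𝕋² → 𝕋²` is homotopic to the identity (characterised by admitting an equivariant
continuous lift). -/
def HomotopicToIdMap (h : T2 → T2) : Prop :=
  ∃ H : R2 → R2, Continuous H ∧ IsLift H h ∧ Equivariant H

/-- `f` is regularly semi-conjugate to the translation T_w : x ↦ x + w, i.e. semi-conjugate via
a continuous surjection homotopic to the identity. -/
def RegSemiConj (f : T2 → T2) (w : T2) : Prop :=
  ∃ h : T2 → T2, Continuous h ∧ Function.Surjective h ∧ HomotopicToIdMap h ∧
    ∀ x : T2, h (f x) = h x + w

/-- `f` is topologically conjugate to a translation of 𝕋². -/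
def TopLinearizable (f : T2 → T2) : Prop :=
  ∃ (w : T2) (h : T2 → T2), IsHomeomorph h ∧ ∀ x : T2, h (f x) = h x + w

/-- `f` is minimal: every orbit is dense. -/
def MinimalMap (f : T2 → T2) : Prop :=
  ∀ x : T2, Dense (Set.range fun n : ℕ => f^[n] x)

/-- The open ball in 𝕋² for the Euclidean-induced distance. -/
def ballT2 (z : T2) (r : ℝ) : Set T2 := {y | distT2 z y < r}

/-- The diameter of a subset of 𝕋² for the Euclidean-induced distance. -/
def diamT2 (S : Set T2) : ℝ := sSup {r | ∃ x ∈ S, ∃ y ∈ S, r = distT2 x y}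

/-- The Euclidean diameter of a subset of ℝ². -/
def diamE (S : Set R2) : ℝ := sSup {r | ∃ x ∈ S, ∃ y ∈ S, r = enorm2 (x - y)}

/-- `F` is a bounded (measurable) fundamental domain for the ℤ²-action on ℝ². -/
def IsBoundedFundDom (F : Set R2) : Prop :=
  MeasurableSet F ∧ Bornology.IsBounded F ∧
    (∀ x : R2, ∃ v : ℤ × ℤ, x - intVec v ∈ F) ∧
    ∀ v : ℤ × ℤ, v ≠ 0 → F ∩ ((fun x => x + intVec v) '' F) = ∅

/-- `D` is an open topological disc in 𝕋². -/
def IsTopDisc (D : Set T2) : Prop :=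
  IsOpen D ∧ Nonempty (D ≃ₜ Metric.ball (0 : R2) 1)

/-- `D` is simple with respect to the fundamental domain `F`: some connected component of
π⁻¹(D) is contained in `F`. -/
def IsSimpleDisc (D : Set T2) (F : Set R2) : Prop :=
  ∃ x ∈ pr2 ⁻¹' D, connectedComponentIn (pr2 ⁻¹' D) x ⊆ F

/-- `u` is the rotation vector of `g`, defined as the mean displacement
∫_{𝕋²} (g̃(x̃) − x̃) dλ(x) mod ℤ² of an equivariant lift `G` of `g`. -/
def IsRotOf (g : T2 → T2) (u : T2) : Prop :=
  ∃ (G : R2 → R2) (Φ : T2 → R2), Continuous G ∧ IsLift G g ∧ Equivariant G ∧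
    (∀ z : R2, Φ (pr2 z) = G z - z) ∧ u = pr2 (∫ x : T2, Φ x)

/-- The set Γ = ((ℚ×ℝ)/ℤ²) ∪ ((ℝ×ℚ)/ℤ²) of points of 𝕋² with at least one rational
coordinate. -/
def GammaSet : Set T2 :=
  {x | (∃ q : ℚ, x.1 = ((q : ℝ) : AddCircle (1 : ℝ))) ∨
       (∃ q : ℚ, x.2 = ((q : ℝ) : AddCircle (1 : ℝ)))}

/-!
Let `H` be a lift of the semi-conjugacy. If a homeomorphism of the plane is semi-conjugate by `H` to
a nontrivial translation, then a path connected set disjoint from its image is disjoint from all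
its iterates. Since area is preserved and `H` is at bounded distance from the identity, no ball of
radius `r ≤ 1` can be disjoint from its image once the drift `δ` of the homeomorphism is small
compared with `r ^ 2`.

For the iterates of the Lipschitz lift `F` of `f`, the super-Liouvillean drifts `n • ω - p` beat the
Lipschitz constants `K ^ n`, so that some `F ^ n - p` tend uniformly to the identity. It follows
that a continuous function `ψ` on the torus invariant under `f` is constant: the orbits of two such
near-identity maps with nonparallel drifts trace curves along which `ψ` is almost constant, and
these curves cross. Applied to `H ∘ G - H`, where `G` lifts `g`, this shows that `G` also has a
drift; it equals the rotation vector modulo `ℤ²`, hence is zero for a suitable `G`. Then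
`(F ^ n - p) ∘ G` has small nonzero drift and cannot move any small ball off itself, which forces
`G` to be the identity.
-/

section ContinuousLogarithms

open Complex

variable {A : Type*} [TopologicalSpace A]

theorem exists_continuous_log [SimplyConnectedSpace A] [LocallyPathConnectedSpace A]
    {φ : A → ℂ} (hφ : Continuous φ) (h0 : ∀ a, φ a ≠ 0) :
    ∃ L : A → ℂ, Continuous L ∧ ∀ a, exp (L a) = φ a := by
  obtain ⟨a₀⟩ : Nonempty A := inferInstance
  obtain ⟨L, ⟨-, hL⟩, -⟩ := isCoveringMapOn_exp.existsUnique_continuousMap_lifts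
    (f := ⟨φ, hφ⟩) (a₀ := a₀) (e₀ := log (φ a₀)) (by simp [exp_log (h0 a₀)])
    (fun a => by simpa using h0 a)
  exact ⟨L, L.continuous, congrFun hL⟩

variable [PreconnectedSpace A] {L : A → ℂ}

theorem eq_of_exp_eq_const (hL : Continuous L) {w : ℂ} (h : ∀ a, exp (L a) = w) (a b : A) :
    L a = L b :=
  isCoveringMap_exp.const_of_comp hL (fun a b => Subtype.ext ((h a).trans (h b).symm)) a b

theorem eq_of_exp_mem_slitPlane (hL : Continuous L) (h : ∀ a, exp (L a) ∈ slitPlane) {a b : A}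
    (hab : exp (L a) = exp (L b)) : L a = L b := by
  have hconst := eq_of_exp_eq_const (L := fun a => L a - log (exp (L a))) (w := 1)
    (hL.sub (hL.cexp.clog h))
    (fun a => by rw [exp_sub, exp_log (exp_ne_zero _), div_self (exp_ne_zero _)]) a b
  simpa only [hab, sub_left_inj] using hconst

theorem div_mem_slitPlane_of_norm_sub_lt {z w : ℂ} (h : ‖w - z‖ < ‖z‖) : w / z ∈ slitPlane := by
  have hz : z ≠ 0 := norm_pos_iff.1 ((norm_nonneg _).trans_lt h)
  have hnear : ‖(w - z) / z‖ < 1 := by rwa [norm_div, div_lt_one (norm_pos_iff.2 hz)]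
  have := mem_slitPlane_of_norm_lt_one hnear
  rwa [← div_sub_one hz, add_sub_cancel] at this

theorem eq_of_periodic_of_exp_eq {X : Type*} {g : ℂ → X}
    (hg : Function.Periodic g (2 * Real.pi * I)) {s t : ℂ} (h : exp s = exp t) : g s = g t := by
  obtain ⟨n, rfl⟩ := exp_eq_exp_iff_exists_int.1 h
  exact hg.int_mul n t

/-- On a large circle `Ψ z / z` stays in the slit plane, so that its logarithm does not wind. -/
theorem periodic_of_exp_eq_div_exp {Ψ Λ : ℂ → ℂ} {C : ℝ} (hΨ : ∀ z, ‖Ψ z - z‖ ≤ C)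
    (hΛ : Continuous Λ) (hexp : ∀ s, exp (Λ s) = Ψ (exp s) / exp s) :
    Function.Periodic Λ (2 * Real.pi * I) := by
  set s₀ : ℂ := ((Real.log (|C| + 1) : ℝ) : ℂ)
  have hs₀ : ∀ t : ℝ, ‖exp (s₀ + t * I)‖ = |C| + 1 := fun t => by
    simp [s₀, norm_exp, Real.exp_log (by positivity : 0 < |C| + 1)]
  have hcircle : Λ (s₀ + (2 * Real.pi : ℝ) * I) = Λ (s₀ + (0 : ℝ) * I) := by
    refine eq_of_exp_mem_slitPlane (L := fun t : ℝ => Λ (s₀ + t * I)) (by fun_prop)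
      (fun t => ?_) ?_
    · rw [hexp]
      refine div_mem_slitPlane_of_norm_sub_lt ((hΨ _).trans_lt ?_)
      linarith [hs₀ t, le_abs_self C]
    · simp only [hexp, exp_add, exp_two_pi_mul_I, ofReal_mul, ofReal_ofNat, ofReal_zero, zero_mul,
        exp_zero]
  have hconst := eq_of_exp_eq_const (L := fun s => Λ (s + 2 * Real.pi * I) - Λ s) (w := 1)
    (by fun_prop) (fun s => by rw [exp_sub, hexp, hexp, exp_add, exp_two_pi_mul_I, mul_one,
      ← hexp, div_self (exp_ne_zero _)])
  intro s
  have h := hconst s s₀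
  simp only [ofReal_mul, ofReal_ofNat, ofReal_zero, zero_mul, add_zero] at hcircle
  rwa [hcircle, sub_self, sub_eq_zero] at h

theorem exists_eq_zero_of_norm_sub_self_le {Φ : ℂ → ℂ} (hΦ : Continuous Φ) {C : ℝ}
    (hC : ∀ z, ‖Φ z - z‖ ≤ C) : ∃ z, Φ z = 0 := by
  by_contra! hne
  obtain ⟨L, hL, hexp⟩ := exists_continuous_log hΦ hne
  have hper := periodic_of_exp_eq_div_exp (Λ := fun s => L (exp s) - s) hC (by fun_prop)
    (fun s => by rw [exp_sub, hexp]) 0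
  simp only [zero_add, exp_two_pi_mul_I, exp_zero, sub_zero, sub_eq_self] at hper
  exact two_pi_I_ne_zero hper

/-- The exponential turns the off-diagonal pairs `(z, z + exp s)` into a simply connected space. -/
theorem exists_log_slope_exp {Q : ℂ → ℂ} (hQ : Continuous Q) (hinj : Function.Injective Q)
    {C : ℝ} (hC : ∀ z, ‖Q z - z‖ ≤ C) :
    ∃ T : ℂ → ℂ → ℂ, Continuous (fun p : ℂ × ℂ => T p.1 p.2) ∧
      (∀ z s, exp (T z s) = (Q (z + exp s) - Q z) / exp s) ∧
      (∀ z, Function.Periodic (T z) (2 * Real.pi * I)) ∧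
      ∀ z s, T (z + exp s) (s + Real.pi * I) = T z s := by
  have hne : ∀ z s, Q (z + exp s) - Q z ≠ 0 := fun z s =>
    sub_ne_zero.2 (hinj.ne (by simp only [ne_eq, add_eq_left, exp_ne_zero, not_false_iff]))
  have hslope : ∀ p : ℂ × ℂ, (Q (p.1 + exp p.2) - Q p.1) / exp p.2 ≠ 0 :=
    fun p => div_ne_zero (hne _ _) (exp_ne_zero _)
  obtain ⟨T, hT, hexp⟩ := exists_continuous_log
    (by fun_prop (disch := exact fun _ => exp_ne_zero _)) hslope
  have hper : ∀ z, Function.Periodic (fun s => T (z, s)) (2 * Real.pi * I) := fun z => by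
    refine periodic_of_exp_eq_div_exp (Ψ := fun x => Q (z + x) - Q z) (C := C + C) (fun x => ?_)
      (by fun_prop) fun s => hexp (z, s)
    calc ‖Q (z + x) - Q z - x‖ = ‖(Q (z + x) - (z + x)) - (Q z - z)‖ := by congr 1; ring
      _ ≤ C + C := norm_sub_le_of_le (hC _) (hC _)
  have hpi : ∀ s : ℂ, exp (s + Real.pi * I) = -exp s := fun s => by
    rw [exp_add, exp_pi_mul_I, mul_neg_one]
  have hconst := eq_of_exp_eq_const
    (L := fun p : ℂ × ℂ => T (p.1 + exp p.2, p.2 + Real.pi * I) - T p) (w := 1) (by fun_prop)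
    (fun p => by
      rw [exp_sub, hexp, hexp, hpi, add_neg_cancel_right, div_neg, ← neg_div, neg_sub,
        div_self (hslope p)])
  refine ⟨fun z s => T (z, s), hT, fun z s => hexp (z, s), hper, fun z s => ?_⟩
  have htwice := hconst (z + exp s, s + Real.pi * I) (z, s)
  have hturn : T (z, s + 2 * Real.pi * I) = T (z, s) := hper z s
  simp only [hpi, add_neg_cancel_right] at htwice
  rw [show s + Real.pi * I + Real.pi * I = s + 2 * Real.pi * I by ring, hturn] at htwice
  change T (z + exp s, s + Real.pi * I) = T (z, s)
  linear_combination -htwice / 2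

theorem continuousOn_comp_log_of_periodic {X Y : Type*} [TopologicalSpace X] [TopologicalSpace Y]
    {T : X → ℂ → Y} (hT : Continuous fun p : X × ℂ => T p.1 p.2)
    (hper : ∀ x, Function.Periodic (T x) (2 * Real.pi * I)) :
    ContinuousOn (fun p : X × ℂ => T p.1 (log p.2)) {p | p.2 ≠ 0} := by
  rintro ⟨x₀, w₀⟩ (hw₀ : w₀ ≠ 0)
  refine ContinuousAt.continuousWithinAt ?_
  have hbranch : ContinuousAt (fun p : X × ℂ => log (p.2 / w₀) + log w₀) (x₀, w₀) :=
    ((continuousAt_snd.div_const w₀).clog (by simp [hw₀])).add_const _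
  have hlocal : ContinuousAt (fun p : X × ℂ => T p.1 (log (p.2 / w₀) + log w₀)) (x₀, w₀) :=
    hT.continuousAt.comp (f := fun p : X × ℂ => (p.1, log (p.2 / w₀) + log w₀))
      (continuousAt_fst.prodMk hbranch)
  refine hlocal.congr ?_
  filter_upwards [continuousAt_snd.eventually_ne hw₀] with p hp
  refine eq_of_periodic_of_exp_eq (hper p.1) ?_
  rw [exp_add, exp_log hw₀, exp_log (div_ne_zero hp hw₀), exp_log hp, div_mul_cancel₀ _ hw₀]

theorem exists_symmetric_log_slope {Q : ℂ → ℂ} (hQ : Continuous Q) (hinj : Function.Injective Q)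
    {C : ℝ} (hC : ∀ z, ‖Q z - z‖ ≤ C) :
    ∃ σ : ℂ → ℂ → ℂ, ContinuousOn (fun p : ℂ × ℂ => σ p.1 p.2) {p | p.1 ≠ p.2} ∧
      (∀ a b, a ≠ b → exp (σ a b) = (Q b - Q a) / (b - a)) ∧ ∀ a b, a ≠ b → σ a b = σ b a := by
  obtain ⟨T, hT, hexp, hper, hflip⟩ := exists_log_slope_exp hQ hinj hC
  have hlog : ∀ {a b : ℂ}, a ≠ b → exp (log (b - a)) = b - a := fun hab =>
    exp_log (sub_ne_zero.2 hab.symm)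
  refine ⟨fun a b => T a (log (b - a)), ?_, fun a b hab => ?_, fun a b hab => ?_⟩
  · exact (continuousOn_comp_log_of_periodic hT hper).comp
      (f := fun p : ℂ × ℂ => (p.1, p.2 - p.1)) (by fun_prop)
      fun p hp => sub_ne_zero.2 (Ne.symm hp)
  · rw [hexp, hlog hab, add_sub_cancel]
  · change T a (log (b - a)) = T b (log (a - b))
    rw [← hflip a, hlog hab, add_sub_cancel]
    refine eq_of_periodic_of_exp_eq (hper b) ?_
    rw [exp_add, exp_pi_mul_I, hlog hab, hlog hab.symm, mul_neg_one, neg_sub]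

/-- Three logarithms are compared: `L` of the displacement `Q z - z`, `Θ` of `Q (y u) - y v` along
a path `y` in `E` from `Q (Q x)` to `x`, and the symmetric `σ` of the slopes of `Q`. They give two
incompatible values for `Θ (1, 0) - L (Q x)`. -/
theorem apply_apply_notMem_of_free_complex {Q : ℂ → ℂ} (hQ : Continuous Q)
    (hinj : Function.Injective Q) {C : ℝ} (hC : ∀ z, ‖Q z - z‖ ≤ C) (hfix : ∀ z, Q z ≠ z)
    {E : Set ℂ} (hE : IsPathConnected E) (hfree : ∀ z ∈ E, Q z ∉ E) : ∀ z ∈ E, Q (Q z) ∉ E := by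
  intro x hx hx2
  obtain ⟨σ, hσ, hσexp, hσsymm⟩ := exists_symmetric_log_slope hQ hinj hC
  obtain ⟨L, hL, hLexp⟩ := exists_continuous_log (φ := fun z => Q z - z) (by fun_prop)
    fun z => sub_ne_zero.2 (hfix z)
  obtain ⟨c, hc⟩ := hE.joinedIn _ hx2 _ hx
  set y : C(ℝ, ℂ) := c.extend
  have hy : Continuous y := y.continuous
  have hyE : ∀ u, y u ∈ E := fun u => hc _
  have hy0 : y 0 = Q (Q x) := c.extend_zero
  have hy1 : y 1 = x := c.extend_one
  have hyne : ∀ u v, Q (y u) ≠ y v := fun u v h => hfree _ (hyE u) (h ▸ hyE v)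
  obtain ⟨Θ, hΘ, hΘexp⟩ := exists_continuous_log (φ := fun p : ℝ × ℝ => Q (y p.1) - y p.2)
    (by fun_prop) fun p => sub_ne_zero.2 (hyne _ _)
  have horbit := eq_of_exp_eq_const (L := fun z => σ z (Q z) - (L (Q z) - L z)) (w := 1)
    ((hσ.comp_continuous (continuous_id.prodMk hQ) fun z => (hfix z).symm).sub (by fun_prop))
    (fun z => by
      rw [exp_sub, hσexp _ _ (hfix z).symm, exp_sub, hLexp, hLexp, div_self]
      exact div_ne_zero (sub_ne_zero.2 (hfix _)) (sub_ne_zero.2 (hfix _))) x (Q x)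
  have hedge := eq_of_exp_eq_const
    (L := fun v : ℝ => Θ (1, v) + σ (y v) (Q x) - Θ (v, 0)) (w := -1)
    (((by fun_prop : Continuous fun v : ℝ => Θ (1, v)).add (hσ.comp_continuous
      (hy.prodMk continuous_const) fun v => hy1 ▸ (hyne 1 v).symm)).sub (by fun_prop))
    (fun v => by
      have h1 := sub_ne_zero.2 (hyne 1 v)
      have h2 := sub_ne_zero.2 (hyne v 0)
      rw [hy1] at h1
      rw [hy0] at h2
      rw [exp_sub, exp_add, hσexp _ _ (hy1 ▸ (hyne 1 v).symm), hΘexp, hΘexp, hy1, hy0,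
        mul_div_cancel₀ _ h1, ← neg_sub, neg_div, div_self h2]) 0 1
  have hdiag := eq_of_exp_eq_const (L := fun u : ℝ => Θ (u, u) - L (y u)) (w := 1) (by fun_prop)
    (fun u => by rw [exp_sub, hΘexp, hLexp, div_self (sub_ne_zero.2 (hyne u u))]) 0 1
  simp only [hy0, hy1, hσsymm _ _ (hfix (Q x))] at horbit hedge hdiag
  have hsame : Θ (1, 0) - L (Q x) = Θ (1, 1) - L x := by
    linear_combination hedge / 2 + hdiag / 2 + horbit / 2
  have hexp := congrArg exp hsame
  rw [exp_sub, exp_sub, hΘexp, hΘexp, hLexp, hLexp, hy0, hy1, div_self (sub_ne_zero.2 (hfix x)),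
    ← neg_sub, neg_div, div_self (sub_ne_zero.2 (hfix _))] at hexp
  norm_num at hexp

end ContinuousLogarithms

theorem apply_apply_notMem_of_free {Q : R2 → R2} (hQ : Continuous Q)
    (hinj : Function.Injective Q) {C : ℝ} (hC : ∀ z, ‖Q z - z‖ ≤ C) (hfix : ∀ z, Q z ≠ z)
    {E : Set R2} (hE : IsPathConnected E) (hfree : ∀ z ∈ E, Q z ∉ E) : ∀ z ∈ E, Q (Q z) ∉ E := by
  let e : ℂ ≃L[ℝ] R2 := Complex.equivRealProdCLM
  have hconj := apply_apply_notMem_of_free_complex (Q := fun z => e.symm (Q (e z)))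
    (E := e.symm '' E) (C := ‖(e.symm : R2 →L[ℝ] ℂ)‖ * C) (by fun_prop)
    (e.symm.injective.comp (hinj.comp e.injective))
    (fun z => by
      have hbound := (e.symm : R2 →L[ℝ] ℂ).le_opNorm_of_le (hC (e z))
      simpa only [ContinuousLinearEquiv.coe_coe, map_sub, e.symm_apply_apply] using hbound)
    (fun z h => hfix (e z) ((e.symm_apply_eq).1 h))
    (hE.image e.symm.continuous)
    (by
      rintro _ ⟨z, hz, rfl⟩
      rw [e.apply_symm_apply, e.symm.injective.mem_set_image]
      exact hfree z hz)
  intro z hz hz2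
  refine hconj (e.symm z) (Set.mem_image_of_mem _ hz) ?_
  rw [e.apply_symm_apply, e.apply_symm_apply]
  exact Set.mem_image_of_mem _ hz2

section Separation

variable {Y : Type*} [TopologicalSpace Y]

theorem frontier_connectedComponentIn_compl_subset [LocallyConnectedSpace Y] {X : Set Y}
    (hX : IsClosed X) (a : Y) : frontier (connectedComponentIn Xᶜ a) ⊆ X := by
  rintro y ⟨hy, hyL⟩
  by_contra hyX
  rw [hX.isOpen_compl.connectedComponentIn.interior_eq] at hyL
  obtain ⟨z, hzy, hza⟩ := mem_closure_iff.1 hy _ (hX.isOpen_compl.connectedComponentIn (x := y))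
    (mem_connectedComponentIn hyX)
  exact hyL (connectedComponentIn_eq hza ▸ connectedComponentIn_eq hzy ▸
    mem_connectedComponentIn hyX)

theorem image_eq_of_image_subset_of_pow_image_eq {Q : Y ≃ₜ Y} {L : Set Y} (hL : Q '' L ⊆ L)
    {s : ℕ} (hs : s ≠ 0) (hsL : (Q ^ s : Y ≃ₜ Y) '' L = L) : Q '' L = L := by
  have hpow : ∀ k : ℕ, (Q ^ k : Y ≃ₜ Y) '' L ⊆ L := by
    intro k
    induction k with
    | zero => rw [pow_zero]; exact (Set.image_id L).subset
    | succ k ih =>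
      rw [pow_succ', show (⇑(Q * Q ^ k) : Y → Y) = Q ∘ (Q ^ k : Y ≃ₜ Y) from rfl, Set.image_comp]
      exact (Set.image_mono ih).trans hL
  obtain ⟨k, rfl⟩ := Nat.exists_eq_succ_of_ne_zero hs
  refine hL.antisymm ?_
  rw [Nat.succ_eq_add_one, pow_succ',
    show (⇑(Q * Q ^ k) : Y → Y) = Q ∘ (Q ^ k : Y ≃ₜ Y) from rfl, Set.image_comp] at hsL
  exact hsL.symm.subset.trans (Set.image_mono (hpow k))

/-- `Q` keeps `a` on the same side of `Q '' X`, and `Q ^ s` keeps `a` on the same side of `X`. -/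
def KeepsSide (Q : Y ≃ₜ Y) (X : Set Y) (s : ℕ) (a : Y) : Prop :=
  Q a ∈ connectedComponentIn (Q '' X)ᶜ a ∧ (Q ^ s : Y ≃ₜ Y) a ∈ connectedComponentIn Xᶜ a

variable {Q : Y ≃ₜ Y} {X : Set Y} {s : ℕ} {a b : Y}

theorem notMem_of_mem_connectedComponentIn_compl (h : b ∈ connectedComponentIn Xᶜ a) : a ∉ X :=
  connectedComponentIn_nonempty_iff.1 ⟨b, h⟩

theorem KeepsSide.image_connectedComponentIn (ha : KeepsSide Q X s a) :
    Q '' connectedComponentIn Xᶜ a = connectedComponentIn (Q '' X)ᶜ a := by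
  rw [Q.image_connectedComponentIn (notMem_of_mem_connectedComponentIn_compl ha.2), Q.image_compl,
    connectedComponentIn_eq ha.1]

theorem KeepsSide.pow_image_connectedComponentIn (ha : KeepsSide Q X s a)
    (hsX : (Q ^ s : Y ≃ₜ Y) '' X = X) :
    (Q ^ s : Y ≃ₜ Y) '' connectedComponentIn Xᶜ a = connectedComponentIn Xᶜ a := by
  rw [(Q ^ s).image_connectedComponentIn (notMem_of_mem_connectedComponentIn_compl ha.2),
    (Q ^ s).image_compl, hsX, ← connectedComponentIn_eq ha.2]

theorem KeepsSide.subset_image_connectedComponentIn [PreconnectedSpace Y] [LocallyConnectedSpace Y]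
    (ha : KeepsSide Q X s a) (hXc : IsClosed X) (hX : IsConnected X)
    (hdisj : Disjoint (Q '' X) X) (hs : s ≠ 0) (hsX : (Q ^ s : Y ≃ₜ Y) '' X = X) :
    X ⊆ Q '' connectedComponentIn Xᶜ a := by
  set L := connectedComponentIn Xᶜ a
  have haL : a ∈ L := mem_connectedComponentIn (notMem_of_mem_connectedComponentIn_compl ha.2)
  have hQL : Q '' L = connectedComponentIn (Q '' X)ᶜ a := ha.image_connectedComponentIn
  have haQL : a ∈ Q '' L := hQL ▸ mem_connectedComponentIn
    (notMem_of_mem_connectedComponentIn_compl ha.1)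
  by_contra hsub
  have hmiss : Q '' L ⊆ Xᶜ := by
    intro y hyL hyX
    rw [hQL] at hyL hsub
    rw [connectedComponentIn_eq hyL] at hsub
    exact hsub (hX.isPreconnected.subset_connectedComponentIn hyX hdisj.subset_compl_left)
  have hQLL : Q '' L = L := by
    refine image_eq_of_image_subset_of_pow_image_eq ?_ hs (ha.pow_image_connectedComponentIn hsX)
    exact (isPreconnected_connectedComponentIn.image _ Q.continuous.continuousOn
      ).subset_connectedComponentIn haQL hmiss
  have hfrontier : frontier L ⊆ Q '' X ∩ X := by
    refine Set.subset_inter ?_ (frontier_connectedComponentIn_compl_subset hXc a)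
    rw [← hQLL, hQL]
    exact frontier_connectedComponentIn_compl_subset (Q.isClosed_image.2 hXc) a
  rw [hdisj.inter_eq, Set.subset_empty_iff, frontier_eq_empty_iff] at hfrontier
  rcases hfrontier with hempty | huniv
  · rw [hempty] at haL
    exact haL
  · obtain ⟨x, hx⟩ := hX.nonempty
    exact connectedComponentIn_subset _ _ (huniv ▸ Set.mem_univ x : x ∈ L) hx

/-- Both sides contain the preimage of `X` under `Q`, hence they coincide. -/
theorem KeepsSide.mem_connectedComponentIn_compl [PreconnectedSpace Y] [LocallyConnectedSpace Y]
    (ha : KeepsSide Q X s a) (hb : KeepsSide Q X s b) (hXc : IsClosed X) (hX : IsConnected X)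
    (hdisj : Disjoint (Q '' X) X) (hs : s ≠ 0) (hsX : (Q ^ s : Y ≃ₜ Y) '' X = X) :
    b ∈ connectedComponentIn Xᶜ a := by
  obtain ⟨x, hx⟩ := hX.nonempty
  obtain ⟨y, hya, hyx⟩ := ha.subset_image_connectedComponentIn hXc hX hdisj hs hsX hx
  obtain ⟨y', hyb, hyx'⟩ := hb.subset_image_connectedComponentIn hXc hX hdisj hs hsX hx
  obtain rfl : y = y' := Q.injective (hyx.trans hyx'.symm)
  rw [connectedComponentIn_eq hya, ← connectedComponentIn_eq hyb]
  exact mem_connectedComponentIn (notMem_of_mem_connectedComponentIn_compl hb.2)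

end Separation

section QuasiLines

variable {E : Type*} [NormedAddCommGroup E] [NormedSpace ℝ E]

/-- A continuous curve at bounded distance from the uniform motion `t ↦ t • v`. -/
def IsQuasiLine (l : ℝ → E) (v : E) : Prop :=
  Continuous l ∧ ∃ K, ∀ t, ‖l t - t • v‖ ≤ K

theorem IsQuasiLine.isClosed_range [ProperSpace E] {l : ℝ → E} {v : E} (hl : IsQuasiLine l v)
    (hv : v ≠ 0) : IsClosed (Set.range l) := by
  obtain ⟨hlc, K, hK⟩ := hl
  have hgrowth : Tendsto (fun t : ℝ => ‖t‖ * ‖v‖ - K) (Bornology.cobounded ℝ) atTop :=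
    tendsto_atTop_add_const_right _ (-K)
      (tendsto_norm_cobounded_atTop.atTop_mul_const (norm_pos_iff.2 hv))
  have hproper : IsProperMap l := by
    rw [isProperMap_iff_tendsto_cocompact, ← Metric.cobounded_eq_cocompact,
      ← Metric.cobounded_eq_cocompact, ← tendsto_norm_atTop_iff_cobounded]
    refine ⟨hlc, tendsto_atTop_mono (fun t => ?_) hgrowth⟩
    have := norm_sub_norm_le (t • v) (l t)
    rw [norm_smul, norm_sub_rev] at this
    linarith [hK t]
  exact hproper.isClosedMap.isClosed_range

theorem exists_isQuasiLine_extending_path {w : E} {N : ℝ} (hN : 0 < N)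
    (p : Path ((-N) • w) (N • w)) :
    ∃ β : ℝ → E, IsQuasiLine β w ∧ ∀ t, β t ∈ Set.range p ∨ N ≤ |t| ∧ β t = t • w := by
  obtain ⟨M, hM⟩ := (isCompact_range p.continuous).isBounded.exists_norm_le
  set τ : ℝ → ℝ := fun t => max (-N) (min N t)
  have hτ : ∀ t, |τ t| ≤ N := fun t =>
    abs_le.2 ⟨le_max_left _ _, max_le (by linarith) (min_le_left _ _)⟩
  refine ⟨fun t => p.extend ((t + N) / (2 * N)) + (t - τ t) • w,
    ⟨by fun_prop, M + N * ‖w‖, fun t => ?_⟩, fun t => ?_⟩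
  · calc ‖p.extend ((t + N) / (2 * N)) + (t - τ t) • w - t • w‖
        = ‖p.extend ((t + N) / (2 * N)) - τ t • w‖ := by congr 1; module
      _ ≤ M + N * ‖w‖ := by
        refine norm_sub_le_of_le (hM _ ⟨_, rfl⟩) ?_
        rw [norm_smul, Real.norm_eq_abs]
        exact mul_le_mul_of_nonneg_right (hτ t) (norm_nonneg w)
  · rcases lt_or_ge N t with hright | hright
    · refine Or.inr ⟨hright.le.trans (le_abs_self t), ?_⟩
      simp only [τ, min_eq_left hright.le, max_eq_right (by linarith : -N ≤ N),
        p.extend_of_one_le (show 1 ≤ (t + N) / (2 * N) by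
          rw [le_div_iff₀ (by positivity)]; linarith)]
      module
    rcases lt_or_ge t (-N) with hleft | hleft
    · refine Or.inr ⟨by linarith [neg_abs_le t], ?_⟩
      simp only [τ, min_eq_right hright, max_eq_left hleft.le,
        p.extend_of_le_zero (show (t + N) / (2 * N) ≤ 0 from
          div_nonpos_of_nonpos_of_nonneg (by linarith) (by positivity))]
      module
    · left
      simp only [τ, min_eq_right hright, max_eq_right hleft, sub_self, zero_smul, add_zero]
      exact ⟨_, rfl⟩

/-- The determinant of a pair of vectors, as a linear form in the second one. -/
def det2 (v : R2) : R2 →ₗ[ℝ] ℝ :=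
  v.1 • LinearMap.snd ℝ ℝ ℝ - v.2 • LinearMap.fst ℝ ℝ ℝ

theorem det2_apply (v z : R2) : det2 v z = v.1 * z.2 - v.2 * z.1 := rfl

theorem abs_det2_le (v z : R2) : |det2 v z| ≤ 2 * ‖v‖ * ‖z‖ := by
  have hfst : |v.1 * z.2| ≤ ‖v‖ * ‖z‖ := by
    rw [abs_mul]
    exact mul_le_mul (norm_fst_le v) (norm_snd_le z) (abs_nonneg _) (norm_nonneg _)
  have hsnd : |v.2 * z.1| ≤ ‖v‖ * ‖z‖ := by
    rw [abs_mul]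
    exact mul_le_mul (norm_snd_le v) (norm_fst_le z) (abs_nonneg _) (norm_nonneg _)
  rw [det2_apply]
  linarith [abs_sub (v.1 * z.2) (v.2 * z.1)]

theorem exists_equiv_re_smul_sub_im_smul {v w : R2} (hvw : det2 v w ≠ 0) :
    ∃ e : ℂ ≃L[ℝ] R2, ∀ z, e z = z.re • v - z.im • w := by
  set φ : ℂ →ₗ[ℝ] R2 := Complex.reLm.smulRight v - Complex.imLm.smulRight w
  have hφ : ∀ z, φ z = z.re • v - z.im • w := fun z => rfl
  have hinj : Function.Injective φ := by
    rw [injective_iff_map_eq_zero]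
    intro z hz
    have hfst := congrArg Prod.fst hz
    have hsnd := congrArg Prod.snd hz
    simp only [hφ, Prod.fst_sub, Prod.snd_sub, Prod.smul_fst, Prod.smul_snd, smul_eq_mul,
      Prod.fst_zero, Prod.snd_zero] at hfst hsnd
    refine Complex.ext (mul_right_cancel₀ hvw ?_) (mul_right_cancel₀ hvw ?_)
    · rw [det2_apply, Complex.zero_re]; linear_combination w.2 * hfst - w.1 * hsnd
    · rw [det2_apply, Complex.zero_im]; linear_combination v.2 * hfst - v.1 * hsnd
  exact ⟨(φ.linearEquivOfInjective hinj (by simp)).toContinuousLinearEquiv, hφ⟩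

theorem IsQuasiLine.exists_eq_of_det2_ne_zero {α β : ℝ → R2} {v w : R2} (hα : IsQuasiLine α v)
    (hβ : IsQuasiLine β w) (hvw : det2 v w ≠ 0) : ∃ s t, α s = β t := by
  obtain ⟨hα, K, hK⟩ := hα
  obtain ⟨hβ, M, hM⟩ := hβ
  obtain ⟨e, he⟩ := exists_equiv_re_smul_sub_im_smul hvw
  obtain ⟨z, hz⟩ := exists_eq_zero_of_norm_sub_self_le
    (Φ := fun z => e.symm (α z.re - β z.im)) (by fun_prop) (C := ‖(e.symm : R2 →L[ℝ] ℂ)‖ * (K + M))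
    fun z => by
      have hsub : e.symm (α z.re - β z.im) - z =
          e.symm ((α z.re - z.re • v) - (β z.im - z.im • w)) := by
        rw [e.eq_symm_apply, map_sub, e.apply_symm_apply, he]
        abel
      rw [hsub]
      exact (e.symm : R2 →L[ℝ] ℂ).le_opNorm_of_le (norm_sub_le_of_le (hK _) (hM _))
  exact ⟨z.re, z.im, sub_eq_zero.1 ((map_eq_zero_iff _ e.symm.injective).1 hz)⟩

theorem IsQuasiLine.notMem_connectedComponentIn {l : ℝ → R2} {v w : R2} (hl : IsQuasiLine l v)
    (hvw : det2 v w ≠ 0) {N : ℝ} (hN : 0 < N) (hout : ∀ t, N ≤ |t| → t • w ∉ Set.range l) :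
    N • w ∉ connectedComponentIn (Set.range l)ᶜ ((-N) • w) := by
  intro hmem
  have hv : v ≠ 0 := by
    rintro rfl
    simp [det2_apply] at hvw
  set U := connectedComponentIn (Set.range l)ᶜ ((-N) • w)
  have hmem' : (-N) • w ∈ U :=
    mem_connectedComponentIn (notMem_of_mem_connectedComponentIn_compl hmem)
  have hU : IsPathConnected U :=
    ((hl.isClosed_range hv).isOpen_compl.connectedComponentIn.isConnected_iff_isPathConnected).1
      ⟨⟨_, hmem⟩, isPreconnected_connectedComponentIn⟩
  obtain ⟨p, hp⟩ := hU.joinedIn _ hmem' _ hmem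
  obtain ⟨β, hβ, hβmem⟩ := exists_isQuasiLine_extending_path hN p
  obtain ⟨s, t, hst⟩ := hl.exists_eq_of_det2_ne_zero hβ hvw
  rcases hβmem t with ⟨u, hu⟩ | ⟨ht, hβt⟩
  · exact connectedComponentIn_subset _ _ (hp u) ⟨s, hst.trans hu.symm⟩
  · exact hout t ht ⟨s, hst.trans hβt⟩

end QuasiLines

section BoundedDrift

variable {E : Type*} [NormedAddCommGroup E] [NormedSpace ℝ E]

theorem eq_zero_of_forall_norm_smul_le {v : E} {B : ℝ} (h : ∀ n : ℕ, ‖(n : ℝ) • v‖ ≤ B) :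
    v = 0 := by
  by_contra hv
  obtain ⟨n, hn⟩ := exists_nat_gt (B / ‖v‖)
  rw [div_lt_iff₀ (norm_pos_iff.2 hv)] at hn
  have := h n
  rw [norm_smul, Real.norm_natCast] at this
  linarith

theorem zpow_apply_zpow_apply {Y : Type*} [TopologicalSpace Y] (Q : Y ≃ₜ Y) (m n : ℤ) (z : Y) :
    (Q ^ m : Y ≃ₜ Y) ((Q ^ n : Y ≃ₜ Y) z) = (Q ^ (m + n) : Y ≃ₜ Y) z := by
  rw [zpow_add, Homeomorph.mul_apply]

/-- All orbits of `Q` stay within distance `B` of the uniform motion with velocity `δ`, in both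
time directions. -/
def HasBoundedDrift (Q : E ≃ₜ E) (δ : E) (B : ℝ) : Prop :=
  ∀ (n : ℤ) (z : E), ‖(Q ^ n : E ≃ₜ E) z - z - (n : ℝ) • δ‖ ≤ B

theorem semiconj_add_zpow {H : E → E} {Q : E ≃ₜ E} {δ : E} (hQ : ∀ z, H (Q z) = H z + δ) (n : ℤ)
    (z : E) : H ((Q ^ n : E ≃ₜ E) z) = H z + (n : ℝ) • δ := by
  induction n using Int.induction_on generalizing z with
  | zero => simp
  | succ i ih =>
    rw [zpow_add_one, Homeomorph.mul_apply, ih, hQ]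
    push_cast
    module
  | pred i ih =>
    have hinv : H (Q⁻¹ z) = H z - δ := by
      rw [eq_sub_iff_add_eq, ← hQ]
      exact congrArg H (Q.apply_symm_apply z)
    rw [zpow_sub_one, Homeomorph.mul_apply, ih, hinv]
    push_cast
    module

theorem hasBoundedDrift_of_semiconj {H : E → E} {C : ℝ} {Q : E ≃ₜ E} {δ : E}
    (hH : ∀ z, ‖H z - z‖ ≤ C) (hQ : ∀ z, H (Q z) = H z + δ) : HasBoundedDrift Q δ (2 * C) := by
  intro n z
  calc ‖(Q ^ n : E ≃ₜ E) z - z - (n : ℝ) • δ‖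
      = ‖(H z - z) - (H ((Q ^ n : E ≃ₜ E) z) - (Q ^ n : E ≃ₜ E) z)‖ := by
        rw [semiconj_add_zpow hQ]; congr 1; module
    _ ≤ 2 * C := (norm_sub_le_of_le (hH _) (hH _)).trans_eq (two_mul C).symm

namespace HasBoundedDrift

variable {Q : E ≃ₜ E} {δ : E} {B : ℝ}

theorem nonneg (hQ : HasBoundedDrift Q δ B) : 0 ≤ B := (norm_nonneg _).trans (hQ 0 0)

theorem zpow (hQ : HasBoundedDrift Q δ B) (k : ℤ) : HasBoundedDrift (Q ^ k) ((k : ℝ) • δ) B := by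
  intro n z
  rw [← zpow_mul, smul_smul, ← Int.cast_mul, mul_comm n k]
  exact hQ (k * n) z

theorem norm_apply_sub_le (hQ : HasBoundedDrift Q δ B) (z : E) : ‖Q z - z‖ ≤ B + ‖δ‖ := by
  have h := hQ 1 z
  rw [zpow_one, Int.cast_one, one_smul] at h
  calc ‖Q z - z‖ = ‖(Q z - z - δ) + δ‖ := by rw [sub_add_cancel]
    _ ≤ B + ‖δ‖ := norm_add_le_of_le h le_rfl

theorem apply_ne (hQ : HasBoundedDrift Q δ B) (hδ : δ ≠ 0) (z : E) : Q z ≠ z := by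
  intro hfix
  refine hδ (eq_zero_of_forall_norm_smul_le (B := B) fun n => ?_)
  have hn : (Q ^ (n : ℤ) : E ≃ₜ E) z = z := by
    induction n with
    | zero => simp
    | succ n ih => rw [Nat.cast_succ, zpow_add_one, Homeomorph.mul_apply, hfix, ih]
  have := hQ n z
  rwa [hn, sub_self, zero_sub, norm_neg, Int.cast_natCast] at this

end HasBoundedDrift

theorem HasBoundedDrift.abs_det2_zpow_sub_le {Q : R2 ≃ₜ R2} {δ : R2} {B : ℝ}
    (hQ : HasBoundedDrift Q δ B) (n : ℤ) (z : R2) :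
    |det2 δ ((Q ^ n : R2 ≃ₜ R2) z) - det2 δ z| ≤ 2 * ‖δ‖ * B := by
  have hδδ : det2 δ δ = 0 := by rw [det2_apply]; ring
  calc |det2 δ ((Q ^ n : R2 ≃ₜ R2) z) - det2 δ z|
      = |det2 δ ((Q ^ n : R2 ≃ₜ R2) z - z - (n : ℝ) • δ)| := by
        rw [map_sub, map_sub, map_smul, hδδ, smul_zero, sub_zero]
    _ ≤ 2 * ‖δ‖ * B := (abs_det2_le _ _).trans
        (mul_le_mul_of_nonneg_left (hQ n z) (by positivity))

end BoundedDrift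

section OrbitLine

variable {Y : Type*} [TopologicalSpace Y] {x : Y}

/-- The bi-infinite curve formed by the images under the powers of `T` of an arc from `x` to
`T x`. -/
def orbitLine (T : Y ≃ₜ Y) (γ : Path x (T x)) (t : ℝ) : Y :=
  (T ^ ⌊t⌋ : Y ≃ₜ Y) (γ.extend (Int.fract t))

theorem orbitLine_add_one (T : Y ≃ₜ Y) (γ : Path x (T x)) (t : ℝ) :
    orbitLine T γ (t + 1) = T (orbitLine T γ t) := by
  rw [orbitLine, orbitLine, Int.fract_add_one, Int.floor_add_one, add_comm, zpow_one_add,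
    Homeomorph.mul_apply]

theorem image_range_orbitLine (T : Y ≃ₜ Y) (γ : Path x (T x)) :
    T '' Set.range (orbitLine T γ) = Set.range (orbitLine T γ) := by
  rw [← Set.range_comp, ← (add_right_surjective (1 : ℝ)).range_comp (orbitLine T γ)]
  exact congrArg Set.range (funext fun t => (orbitLine_add_one T γ t).symm)

theorem orbitLine_eq_of_mem_Icc (T : Y ≃ₜ Y) (γ : Path x (T x)) {k : ℤ} {t : ℝ}
    (ht : t ∈ Set.Icc (k : ℝ) (k + 1)) :
    orbitLine T γ t = (T ^ k : Y ≃ₜ Y) (γ.extend (t - k)) := by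
  rcases ht.2.lt_or_eq with hlt | rfl
  · rw [orbitLine, Int.fract, Int.floor_eq_iff.2 ⟨ht.1, hlt⟩]
  · rw [orbitLine, Int.fract_add_one, Int.fract_intCast, Int.floor_add_one, Int.floor_intCast,
      add_sub_cancel_left, γ.extend_zero, γ.extend_one, zpow_add_one, Homeomorph.mul_apply]

theorem locallyFinite_Icc_intCast : LocallyFinite fun k : ℤ => Set.Icc (k : ℝ) (k + 1) := by
  intro x
  refine ⟨Metric.ball x 1, Metric.ball_mem_nhds x one_pos,
    (Set.finite_Icc ⌊x - 2⌋ ⌈x + 1⌉).subset ?_⟩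
  rintro k ⟨y, ⟨hky, hyk⟩, hyx⟩
  rw [Metric.mem_ball, Real.dist_eq, abs_lt] at hyx
  refine ⟨Int.floor_le_iff.2 (by linarith), Int.le_ceil_iff.2 (by linarith)⟩

theorem continuous_orbitLine (T : Y ≃ₜ Y) (γ : Path x (T x)) : Continuous (orbitLine T γ) := by
  refine locallyFinite_Icc_intCast.continuous
    (Set.eq_univ_of_forall fun t => Set.mem_iUnion.2 ⟨⌊t⌋, Int.floor_le t,
      (Int.lt_floor_add_one t).le⟩) (fun k => isClosed_Icc) fun k => ?_
  exact ContinuousOn.congr (by fun_prop : Continuous fun t : ℝ =>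
    (T ^ k : Y ≃ₜ Y) (γ.extend (t - k))).continuousOn fun t ht => orbitLine_eq_of_mem_Icc T γ ht

theorem HasBoundedDrift.isQuasiLine_orbitLine {E : Type*} [NormedAddCommGroup E]
    [NormedSpace ℝ E] {T : E ≃ₜ E} {ε : E} {B : ℝ} (hT : HasBoundedDrift T ε B) {x : E}
    (γ : Path x (T x)) : IsQuasiLine (orbitLine T γ) ε := by
  obtain ⟨M, hM⟩ := (isCompact_range γ.continuous).isBounded.exists_norm_le
  refine ⟨continuous_orbitLine T γ, B + M + ‖ε‖, fun t => ?_⟩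
  set z := γ.extend (Int.fract t)
  calc ‖orbitLine T γ t - t • ε‖
      = ‖((T ^ ⌊t⌋ : E ≃ₜ E) z - z - (⌊t⌋ : ℝ) • ε) + z - Int.fract t • ε‖ := by
        conv_lhs => rw [← Int.floor_add_fract t, add_smul, Int.floor_add_fract]
        rw [orbitLine]
        congr 1
        abel
    _ ≤ B + M + ‖ε‖ := by
        refine norm_sub_le_of_le (norm_add_le_of_le (hT _ _) (hM _ ⟨_, rfl⟩)) ?_
        rw [norm_smul, Real.norm_eq_abs, abs_of_nonneg (Int.fract_nonneg t)]
        exact mul_le_of_le_one_left (norm_nonneg _) (Int.fract_lt_one t).le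

end OrbitLine

section HalfPlanes

variable {E : Type*} [NormedAddCommGroup E] [NormedSpace ℝ E]

theorem mem_connectedComponentIn_compl_of_lt {Y : Set E} {φ : E →ₗ[ℝ] ℝ} {c : ℝ}
    (hY : ∀ y ∈ Y, φ y ≤ c) {z z' : E} (hz : c < φ z) (hz' : c < φ z') :
    z' ∈ connectedComponentIn Yᶜ z :=
  (convex_halfSpace_gt φ.isLinear c).isPreconnected.subset_connectedComponentIn hz
    (fun y hy hyY => (hY y hyY).not_gt hy) hz'

theorem keepsSide_of_lt {Q : E ≃ₜ E} {X : Set E} {φ : E →ₗ[ℝ] ℝ} {D M : ℝ}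
    (hQ : ∀ (n : ℤ) z, |φ ((Q ^ n : E ≃ₜ E) z) - φ z| ≤ D) (hX : ∀ x ∈ X, φ x ≤ M) {a : E}
    (ha : M + 2 * D < φ a) (s : ℕ) : KeepsSide Q X s a := by
  have hD : 0 ≤ D := (abs_nonneg _).trans (hQ 0 0)
  have hQ1 : ∀ z, |φ (Q z) - φ z| ≤ D := fun z => by simpa only [zpow_one] using hQ 1 z
  refine ⟨mem_connectedComponentIn_compl_of_lt (φ := φ) (c := M + D) ?_ (by linarith) ?_,
    mem_connectedComponentIn_compl_of_lt (φ := φ) hX (by linarith) ?_⟩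
  · rintro _ ⟨x, hx, rfl⟩
    linarith [hX x hx, (abs_le.1 (hQ1 x)).2]
  · linarith [(abs_le.1 (hQ1 a)).1]
  · have := (abs_le.1 (hQ s a)).1
    rw [zpow_natCast] at this
    linarith

theorem det2_smul_left (a : ℝ) (v z : R2) : det2 (a • v) z = a * det2 v z := by
  simp only [det2_apply, Prod.smul_fst, Prod.smul_snd, smul_eq_mul]
  ring

theorem exists_det2_pos {δ : R2} (hδ : δ ≠ 0) : ∃ w, 0 < det2 δ w := by
  refine ⟨(-δ.2, δ.1), ?_⟩
  have hsq : det2 δ (-δ.2, δ.1) = δ.1 * δ.1 + δ.2 * δ.2 := by rw [det2_apply]; ring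
  rw [hsq]
  refine (add_nonneg (mul_self_nonneg _) (mul_self_nonneg _)).lt_of_ne' fun h => hδ ?_
  exact Prod.ext (mul_self_add_mul_self_eq_zero.1 h).1 (mul_self_add_mul_self_eq_zero.1 h).2

theorem IsQuasiLine.exists_abs_det2_le {l : ℝ → R2} {s : ℝ} {δ : R2}
    (hl : IsQuasiLine l (s • δ)) : ∃ M, 0 ≤ M ∧ ∀ x ∈ Set.range l, |det2 δ x| ≤ M := by
  obtain ⟨K, hK⟩ := hl.2
  refine ⟨2 * ‖δ‖ * K, mul_nonneg (by positivity) ((norm_nonneg _).trans (hK 0)), ?_⟩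
  rintro _ ⟨t, rfl⟩
  have hpar : det2 δ (l t) = det2 δ (l t - t • s • δ) := by
    simp only [det2_apply, Prod.fst_sub, Prod.snd_sub, Prod.smul_fst, Prod.smul_snd, smul_eq_mul]
    ring
  rw [hpar]
  exact (abs_det2_le _ _).trans (mul_le_mul_of_nonneg_left (hK t) (by positivity))

/-- If `X` were disjoint from its image, the far points on both sides of `X` would lie in the same
complementary component, although `X` separates them. -/
theorem HasBoundedDrift.not_disjoint_image_range {Q : R2 ≃ₜ R2} {δ : R2} {B : ℝ}
    (hQ : HasBoundedDrift Q δ B) (hδ : δ ≠ 0) {s : ℕ} (hs : s ≠ 0) {l : ℝ → R2}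
    (hl : IsQuasiLine l ((s : ℝ) • δ))
    (hinv : (Q ^ s : R2 ≃ₜ R2) '' Set.range l = Set.range l) :
    ¬ Disjoint (Q '' Set.range l) (Set.range l) := by
  intro hdisj
  have hs' : (s : ℝ) ≠ 0 := Nat.cast_ne_zero.2 hs
  obtain ⟨M, hM, hX⟩ := hl.exists_abs_det2_le
  obtain ⟨w, hw⟩ := exists_det2_pos hδ
  set D := 2 * ‖δ‖ * B
  have hD : 0 ≤ D := mul_nonneg (by positivity) hQ.nonneg
  obtain ⟨N, hN⟩ : ∃ N, M + 2 * D < N * det2 δ w :=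
    ⟨(M + 2 * D + 1) / det2 δ w, by rw [div_mul_cancel₀ _ hw.ne']; linarith⟩
  have hN0 : 0 < N := pos_of_mul_pos_left ((by positivity : 0 ≤ M + 2 * D).trans_lt hN) hw.le
  have hright : KeepsSide Q (Set.range l) s (N • w) :=
    keepsSide_of_lt hQ.abs_det2_zpow_sub_le (fun x hx => (le_abs_self _).trans (hX x hx))
      (by rwa [map_smul, smul_eq_mul]) s
  have hleft : KeepsSide Q (Set.range l) s ((-N) • w) :=
    keepsSide_of_lt (φ := -det2 δ) (fun n z => by
      simpa only [LinearMap.neg_apply, neg_sub_neg, abs_sub_comm] using hQ.abs_det2_zpow_sub_le n z)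
      (fun x hx => (neg_le_abs _).trans (hX x hx))
      (by rwa [LinearMap.neg_apply, map_smul, smul_eq_mul, neg_mul, neg_neg]) s
  refine hl.notMem_connectedComponentIn (w := w) (N := N) ?_ hN0 (fun t ht hmem => ?_)
    (hleft.mem_connectedComponentIn_compl hright (hl.isClosed_range (smul_ne_zero hs' hδ))
      (isConnected_range hl.1) hdisj hs hinv)
  · rw [det2_smul_left]
    exact mul_ne_zero hs' hw.ne'
  · have hfar := hX _ hmem
    rw [map_smul, smul_eq_mul, abs_mul, abs_of_pos hw] at hfar
    linarith [mul_le_mul_of_nonneg_right ht hw.le]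

end HalfPlanes

section ReturnTimes

variable {Y : Type*} [TopologicalSpace Y] {Q : Y ≃ₜ Y} {D : Set Y}

/-- The times `n` at which some point of `D` is back in `D`. -/
def returnTimes (Q : Y ≃ₜ Y) (D : Set Y) : Set ℤ :=
  {n | ∃ z ∈ D, (Q ^ n : Y ≃ₜ Y) z ∈ D}

theorem sub_mem_returnTimes {m n : ℤ} {z z' : Y} (hz : z ∈ D) (hz' : z' ∈ D)
    (h : (Q ^ m : Y ≃ₜ Y) z = (Q ^ n : Y ≃ₜ Y) z') : m - n ∈ returnTimes Q D := by
  refine ⟨z, hz, ?_⟩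
  rwa [sub_eq_neg_add, ← zpow_apply_zpow_apply, h, zpow_apply_zpow_apply, neg_add_cancel]

theorem neg_mem_returnTimes {n : ℤ} (hn : n ∈ returnTimes Q D) : -n ∈ returnTimes Q D := by
  obtain ⟨z, hz, hz'⟩ := hn
  simpa only [zero_sub] using sub_mem_returnTimes (m := 0) hz' hz rfl

theorem mem_returnTimes_union_image {n s : ℤ}
    (hn : n ∈ returnTimes Q (D ∪ (Q ^ s : Y ≃ₜ Y) '' D)) :
    n ∈ returnTimes Q D ∨ n + s ∈ returnTimes Q D ∨ n - s ∈ returnTimes Q D := by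
  obtain ⟨z, hz | ⟨d, hd, rfl⟩, hz' | ⟨d', hd', hd''⟩⟩ := hn
  · exact Or.inl ⟨z, hz, hz'⟩
  · exact Or.inr (Or.inr (sub_mem_returnTimes hz hd' hd''.symm))
  · exact Or.inr (Or.inl ⟨d, hd, by rwa [← zpow_apply_zpow_apply]⟩)
  · rw [zpow_apply_zpow_apply] at hd''
    simpa only [add_sub_cancel_right] using Or.inl (sub_mem_returnTimes hd hd' hd''.symm)

theorem exists_least_pos_mem {S : Set ℤ} (hneg : ∀ n ∈ S, -n ∈ S) {n : ℤ} (hn : n ∈ S)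
    (hn0 : n ≠ 0) : ∃ s : ℕ, s ≠ 0 ∧ (s : ℤ) ∈ S ∧ ∀ m ∈ S, 0 < m → (s : ℤ) ≤ m := by
  classical
  have hex : ∃ s : ℕ, s ≠ 0 ∧ (s : ℤ) ∈ S := by
    refine ⟨n.natAbs, Int.natAbs_ne_zero.2 hn0, ?_⟩
    rcases Int.natAbs_eq n with h | h
    · rwa [← h]
    · rw [← neg_eq_iff_eq_neg.2 h]
      exact hneg n hn
  refine ⟨Nat.find hex, (Nat.find_spec hex).1, (Nat.find_spec hex).2, fun m hm hm0 => ?_⟩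
  lift m to ℕ using hm0.le
  exact_mod_cast Nat.find_min' hex ⟨by omega, hm⟩

theorem dvd_of_mem_of_least {S : Set ℤ} (hneg : ∀ n ∈ S, -n ∈ S)
    (hhalf : ∀ b, b ≠ 0 → 2 * b ∈ S → b ∈ S) {s : ℤ} (hs : 0 < s) (hsS : s ∈ S)
    (hleast : ∀ m ∈ S, 0 < m → s ≤ m)
    (hthree : ∀ b, b ≠ 0 → 2 * b + s ∈ S → b ∈ S ∨ b + s ∈ S ∨ b - s ∈ S) :
    ∀ n ∈ S, s ∣ n := by
  have hsodd : Odd s := by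
    by_contra heven
    obtain ⟨m, rfl⟩ := even_iff_two_dvd.1 (Int.not_odd_iff_even.1 heven)
    have := hleast m (hhalf m (by omega) hsS) (by omega)
    omega
  intro n
  induction hk : n.natAbs using Nat.strong_induction_on generalizing n with
  | _ k ih =>
    subst hk
    intro hn
    wlog hpos : 0 < n generalizing n
    · rcases (not_lt.1 hpos).eq_or_lt with rfl | hlt
      · exact dvd_zero s
      · exact (dvd_neg).1 (this (-n) (by simpa only [Int.natAbs_neg] using ih) (hneg n hn)
          (by omega))
    rcases Int.even_or_odd n with heven | hodd
    · obtain ⟨m, rfl⟩ := even_iff_two_dvd.1 heven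
      exact (ih _ (by omega) m rfl (hhalf m (by omega) hn)).mul_left 2
    rcases (hleast n hn hpos).eq_or_lt with rfl | hlt
    · exact dvd_rfl
    obtain ⟨b, hb⟩ := even_iff_two_dvd.1 (hodd.sub_odd hsodd)
    obtain rfl : n = 2 * b + s := by omega
    have hsb : s ∣ b := by
      rcases hthree b (by omega) hn with h | h | h
      · exact ih _ (by omega) _ rfl h
      · exact (dvd_add_self_right).1 (ih _ (by omega) _ rfl h)
      · exact (dvd_sub_self_right).1 (ih _ (by omega) _ rfl h)
    exact (hsb.mul_left 2).add dvd_rfl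

theorem exists_zpow_apply_of_mem_range_orbitLine {x : Y} {s : ℕ} {γ : Path x ((Q ^ s : Y ≃ₜ Y) x)}
    (hγ : ∀ t, γ t ∈ D) {z : Y} (hz : z ∈ Set.range (orbitLine (Q ^ s) γ)) :
    ∃ k : ℤ, ∃ d ∈ D, (Q ^ (s * k) : Y ≃ₜ Y) d = z := by
  obtain ⟨t, rfl⟩ := hz
  refine ⟨⌊t⌋, γ.extend (Int.fract t), hγ _, ?_⟩
  rw [zpow_mul, zpow_natCast, orbitLine]

namespace HasBoundedDrift

variable {Q : R2 ≃ₜ R2} {δ : R2} {B : ℝ} {D : Set R2}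

theorem mem_returnTimes_of_two_mul_mem (hQ : HasBoundedDrift Q δ B) (hδ : δ ≠ 0)
    (hD : IsPathConnected D) {b : ℤ} (hb : b ≠ 0) (h : 2 * b ∈ returnTimes Q D) :
    b ∈ returnTimes Q D := by
  by_contra hfree
  obtain ⟨z, hz, hz'⟩ := h
  refine apply_apply_notMem_of_free (Q ^ b).continuous (Q ^ b).injective
    (hQ.zpow b).norm_apply_sub_le
    ((hQ.zpow b).apply_ne (smul_ne_zero (Int.cast_ne_zero.2 hb) hδ)) hD
    (fun z hz hz' => hfree ⟨z, hz, hz'⟩) z hz ?_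
  rwa [zpow_apply_zpow_apply, ← two_mul]

theorem mem_returnTimes_of_two_mul_add_mem (hQ : HasBoundedDrift Q δ B) (hδ : δ ≠ 0)
    (hD : IsPathConnected D) {b s : ℤ} (hb : b ≠ 0) (hs : s ∈ returnTimes Q D)
    (h : 2 * b + s ∈ returnTimes Q D) :
    b ∈ returnTimes Q D ∨ b + s ∈ returnTimes Q D ∨ b - s ∈ returnTimes Q D := by
  have hunion : IsPathConnected (D ∪ (Q ^ s : R2 ≃ₜ R2) '' D) := by
    obtain ⟨z, hz, hz'⟩ := hs
    exact hD.union (hD.image (Q ^ s).continuous) ⟨_, hz', z, hz, rfl⟩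
  refine mem_returnTimes_union_image (hQ.mem_returnTimes_of_two_mul_mem hδ hunion hb ?_)
  obtain ⟨d, hd, hd'⟩ := h
  exact ⟨(Q ^ s : R2 ≃ₜ R2) d, Or.inr ⟨d, hd, rfl⟩, Or.inl (by rwa [zpow_apply_zpow_apply])⟩

/-- With `s` the least positive return time, all return times are multiples of `s`, while the
orbit line of an arc in `D` meets its image under `Q`, so that `s` divides `1`. -/
theorem one_mem_returnTimes (hQ : HasBoundedDrift Q δ B) (hδ : δ ≠ 0) (hD : IsPathConnected D)
    {n : ℤ} (hn0 : n ≠ 0) (hn : n ∈ returnTimes Q D) : 1 ∈ returnTimes Q D := by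
  obtain ⟨s, hs0, hs, hleast⟩ := exists_least_pos_mem (fun _ => neg_mem_returnTimes) hn hn0
  have hdvd : ∀ m ∈ returnTimes Q D, (s : ℤ) ∣ m :=
    dvd_of_mem_of_least (fun _ => neg_mem_returnTimes)
      (fun _ hb => hQ.mem_returnTimes_of_two_mul_mem hδ hD hb) (by omega) hs hleast
      (fun _ hb => hQ.mem_returnTimes_of_two_mul_add_mem hδ hD hb hs)
  obtain ⟨x, hx, hx'⟩ := id hs
  rw [zpow_natCast] at hx'
  obtain ⟨γ, hγ⟩ := hD.joinedIn x hx _ hx'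
  have hline : IsQuasiLine (orbitLine (Q ^ s) γ) ((s : ℝ) • δ) := by
    have := hQ.zpow s
    rw [zpow_natCast, Int.cast_natCast] at this
    exact this.isQuasiLine_orbitLine γ
  obtain ⟨_, ⟨z, hz, rfl⟩, hz'⟩ := Set.not_disjoint_iff.1
    (hQ.not_disjoint_image_range hδ hs0 hline (image_range_orbitLine _ γ))
  obtain ⟨k, d, hd, rfl⟩ := exists_zpow_apply_of_mem_range_orbitLine hγ hz
  obtain ⟨k', d', hd', hd''⟩ := exists_zpow_apply_of_mem_range_orbitLine hγ hz'
  have hs1 : (s : ℤ) ∣ 1 := by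
    have := hdvd _ (sub_mem_returnTimes (m := 1 + s * k) hd hd'
      (by rw [hd'', ← zpow_apply_zpow_apply, zpow_one]))
    rwa [add_sub_assoc, ← mul_sub, dvd_add_left (Dvd.intro _ rfl)] at this
  rwa [Int.eq_one_of_dvd_one (Int.natCast_nonneg s) hs1] at hs

end HasBoundedDrift

end ReturnTimes

section Torus

theorem intVec_neg (v : ℤ × ℤ) : intVec (-v) = -intVec v := by
  simp [intVec]

theorem isEmbedding_intVec : IsEmbedding intVec :=
  Int.isClosedEmbedding_coe_real.isEmbedding.prodMap Int.isClosedEmbedding_coe_real.isEmbedding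

theorem pr2_add (a b : R2) : pr2 (a + b) = pr2 a + pr2 b := by
  simp [pr2]

theorem pr2_eq_zero_iff {a : R2} : pr2 a = 0 ↔ ∃ v, a = intVec v := by
  have hcoe : ∀ x : ℝ, (x : AddCircle (1 : ℝ)) = 0 ↔ ∃ n : ℤ, x = n := fun x => by
    simp only [AddCircle.coe_eq_zero_iff, zsmul_one, eq_comm (b := x)]
  simp only [pr2, Prod.ext_iff, Prod.fst_zero, Prod.snd_zero, hcoe, intVec, Prod.exists,
    exists_and_left, exists_and_right]

theorem pr2_sub (a b : R2) : pr2 (a - b) = pr2 a - pr2 b := by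
  simp [pr2]

theorem pr2_eq_iff {a b : R2} : pr2 a = pr2 b ↔ ∃ v, a = b + intVec v := by
  rw [← sub_eq_zero, ← pr2_sub, pr2_eq_zero_iff]
  simp only [sub_eq_iff_eq_add']

theorem pr2_sub_intVec (a : R2) (v : ℤ × ℤ) : pr2 (a - intVec v) = pr2 a :=
  pr2_eq_iff.2 ⟨-v, by rw [intVec_neg, sub_eq_add_neg]⟩

theorem isOpenQuotientMap_pr2 : IsOpenQuotientMap pr2 :=
  QuotientAddGroup.isOpenQuotientMap_mk.prodMap QuotientAddGroup.isOpenQuotientMap_mk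

theorem dist_pr2_le (a b : R2) : dist (pr2 a) (pr2 b) ≤ dist a b := by
  have hcoe : ∀ x y : ℝ, dist (x : AddCircle (1 : ℝ)) y ≤ dist x y := by
    intro x y
    rw [dist_eq_norm, dist_eq_norm, ← AddCircle.coe_sub]
    exact QuotientAddGroup.norm_mk_le_norm
  exact max_le_max (hcoe _ _) (hcoe _ _)

theorem exists_continuous_descent {X : Type*} [TopologicalSpace X] {η : R2 → X}
    (hη : Continuous η) (hper : ∀ v, Function.Periodic η (intVec v)) :
    ∃ φ : T2 → X, Continuous φ ∧ ∀ z, φ (pr2 z) = η z := by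
  let q : C(R2, T2) := ⟨pr2, isOpenQuotientMap_pr2.continuous⟩
  have hq : IsQuotientMap q := isOpenQuotientMap_pr2.isQuotientMap
  have hfac : Function.FactorsThrough (⟨η, hη⟩ : C(R2, X)) q := by
    intro a b hab
    obtain ⟨v, rfl⟩ := pr2_eq_iff.1 hab
    exact hper v b
  refine ⟨hq.lift ⟨η, hη⟩ hfac, ContinuousMap.continuous _, fun z => ?_⟩
  exact DFunLike.congr_fun (hq.lift_comp ⟨η, hη⟩ hfac) z

theorem exists_norm_le_of_periodic {E : Type*} [NormedAddCommGroup E] {η : R2 → E}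
    (hη : Continuous η) (hper : ∀ v, Function.Periodic η (intVec v)) : ∃ C, ∀ z, ‖η z‖ ≤ C := by
  obtain ⟨φ, hφ, hφη⟩ := exists_continuous_descent hη hper
  obtain ⟨C, hC⟩ := (isCompact_range hφ).isBounded.exists_norm_le
  exact ⟨C, fun z => hφη z ▸ hC _ ⟨_, rfl⟩⟩

theorem uniformContinuous_of_periodic {X : Type*} [UniformSpace X] {η : R2 → X}
    (hη : Continuous η) (hper : ∀ v, Function.Periodic η (intVec v)) : UniformContinuous η := by
  obtain ⟨φ, hφ, hφη⟩ := exists_continuous_descent hη hper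
  have hpr2 : LipschitzWith 1 pr2 := LipschitzWith.of_dist_le_mul fun a b => by
    simpa only [NNReal.coe_one, one_mul] using dist_pr2_le a b
  have hcomp : η = φ ∘ pr2 := funext fun z => (hφη z).symm
  rw [hcomp]
  exact (CompactSpace.uniformContinuous_of_continuous hφ).comp hpr2.uniformContinuous

theorem Equivariant.sub_intVec {F : R2 → R2} (hF : Equivariant F) (z : R2) (v : ℤ × ℤ) :
    F (z - intVec v) = F z - intVec v := by
  simpa only [intVec_neg, ← sub_eq_add_neg] using hF z (-v)

theorem Equivariant.periodic_sub_self {F : R2 → R2} (hF : Equivariant F) (v : ℤ × ℤ) :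
    Function.Periodic (fun z => F z - z) (intVec v) := fun z => by
  simp only [hF z v, add_sub_add_right_eq_sub]

theorem Equivariant.comp {F F' : R2 → R2} (hF : Equivariant F) (hF' : Equivariant F') :
    Equivariant (F ∘ F') := fun z v => by
  simp only [Function.comp_apply, hF' z v, hF (F' z) v]

theorem IsLift.comp {F F' : R2 → R2} {f f' : T2 → T2} (hF : IsLift F f) (hF' : IsLift F' f') :
    IsLift (F ∘ F') (f ∘ f') := fun z => by
  simp only [Function.comp_apply, hF (F' z), hF' z]

theorem exists_eq_add_intVec_of_pr2_eq {Y : Type*} [TopologicalSpace Y] [PreconnectedSpace Y]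
    {a b : Y → R2} (ha : Continuous a) (hb : Continuous b) (hab : ∀ y, pr2 (a y) = pr2 (b y)) :
    ∃ v, ∀ y, a y = b y + intVec v := by
  choose v hv using fun y => pr2_eq_iff.1 (hab y)
  have hvc : Continuous v := by
    rw [isEmbedding_intVec.continuous_iff]
    have hdiff : intVec ∘ v = a - b := funext fun y => (sub_eq_of_eq_add' (hv y)).symm
    rw [hdiff]
    exact ha.sub hb
  obtain hY | ⟨⟨y₀⟩⟩ := isEmpty_or_nonempty Y
  · exact ⟨0, hY.elim⟩
  · exact ⟨v y₀, fun y => by rw [hv y, PreconnectedSpace.constant inferInstance hvc (x := y)]⟩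

theorem IsLift.exists_eq_add_intVec {F F' : R2 → R2} {f : T2 → T2} (hF : Continuous F)
    (hF' : Continuous F') (hl : IsLift F f) (hl' : IsLift F' f) :
    ∃ v, ∀ z, F' z = F z + intVec v :=
  exists_eq_add_intVec_of_pr2_eq hF' hF fun z => by rw [hl, hl']

theorem IsCrDiffeo.exists_lipschitzWith_lift {r : ℕ∞} (hr : 1 ≤ r) {f : T2 → T2}
    (hf : IsCrDiffeo r f) (hiso : IsotopicToId f) :
    ∃ F K, IsLift F f ∧ LipschitzWith K F := by
  obtain ⟨F, -, hF, -, -, hFr, -⟩ := hf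
  obtain ⟨-, F₀, hF₀, hF₀l, hF₀e⟩ := hiso
  obtain ⟨u, hu⟩ := hF₀l.exists_eq_add_intVec hF₀.continuous hFr.continuous hF
  have hFe : Equivariant F := fun z v => by rw [hu, hu, hF₀e, add_right_comm]
  have hF1 : ContDiff ℝ 1 F := hFr.of_le (by exact_mod_cast hr)
  have hper : ∀ v, Function.Periodic (fderiv ℝ F) (intVec v) := fun v z => by
    rw [← fderiv_comp_add_right, funext fun x => hFe x v, fderiv_add_const]
  obtain ⟨L, hL⟩ := exists_norm_le_of_periodic (hF1.continuous_fderiv one_ne_zero) hper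
  refine ⟨F, L.toNNReal, hF, lipschitzWith_of_nnnorm_fderiv_le (𝕜 := ℝ)
    (hF1.differentiable one_ne_zero) fun z => ?_⟩
  rw [← NNReal.coe_le_coe, coe_nnnorm]
  exact (hL z).trans (Real.le_coe_toNNReal L)

end Torus

section DriftLift

/-- The deck translate `Q - p` of the homeomorphism `Q` of the plane. -/
def shiftLift (Q : R2 ≃ₜ R2) (p : ℤ × ℤ) : R2 ≃ₜ R2 :=
  Q.trans (Homeomorph.subRight (intVec p))

theorem shiftLift_apply (Q : R2 ≃ₜ R2) (p : ℤ × ℤ) (z : R2) :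
    shiftLift Q p z = Q z - intVec p := rfl

/-- `Q` is an equivariant lift of `q` which `H` semi-conjugates to the translation by `δ`. -/
structure IsDriftLift (H : R2 → R2) (Q : R2 ≃ₜ R2) (q : T2 → T2) (δ : R2) : Prop where
  isLift : IsLift Q q
  equivariant : Equivariant Q
  semiconj : ∀ z, H (Q z) = H z + δ

namespace IsDriftLift

variable {H : R2 → R2} {Q Q' : R2 ≃ₜ R2} {q q' : T2 → T2} {δ δ' : R2}

theorem shift (hQ : IsDriftLift H Q q δ) (hH : Equivariant H) (p : ℤ × ℤ) :
    IsDriftLift H (shiftLift Q p) q (δ - intVec p) where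
  isLift z := by rw [shiftLift_apply, pr2_sub_intVec, hQ.isLift]
  equivariant z v := by
    rw [shiftLift_apply, shiftLift_apply, hQ.equivariant, add_sub_right_comm]
  semiconj z := by rw [shiftLift_apply, hH.sub_intVec, hQ.semiconj, add_sub_assoc]

theorem mul (hQ : IsDriftLift H Q q δ) (hQ' : IsDriftLift H Q' q' δ') :
    IsDriftLift H (Q * Q') (q ∘ q') (δ + δ') where
  isLift := hQ.isLift.comp hQ'.isLift
  equivariant := hQ.equivariant.comp hQ'.equivariant
  semiconj z := by
    rw [Homeomorph.mul_apply, hQ.semiconj, hQ'.semiconj, add_assoc, add_comm δ']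

theorem pow (hQ : IsDriftLift H Q q δ) (n : ℕ) :
    IsDriftLift H (Q ^ n) q^[n] ((n : ℝ) • δ) := by
  induction n with
  | zero => exact ⟨fun _ => rfl, fun _ _ => rfl, fun z => by simp⟩
  | succ n ih =>
    rw [pow_succ, Function.iterate_succ, Nat.cast_succ, add_smul, one_smul]
    exact ih.mul hQ

end IsDriftLift

theorem RegSemiConj.exists_isDriftLift {f : T2 → T2} {ω : R2} (hf : RegSemiConj f (pr2 ω))
    (hiso : IsotopicToId f) : ∃ (H : R2 → R2) (F : R2 ≃ₜ R2), Continuous H ∧ Equivariant H ∧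
      IsDriftLift H F f ω := by
  obtain ⟨h, -, -, ⟨H, hHc, hHl, hHe⟩, hconj⟩ := hf
  obtain ⟨-, F, hF, hFl, hFe⟩ := hiso
  obtain ⟨v, hv⟩ := exists_eq_add_intVec_of_pr2_eq (b := fun z => H z + ω)
    (hHc.comp hF.continuous) (hHc.add continuous_const) fun z => by
      rw [Function.comp_apply, hHl, hFl, hconj, pr2_add, hHl]
  have hdrift : IsDriftLift H (hF.homeomorph) f (ω + intVec v) :=
    ⟨hFl, hFe, fun z => (hv z).trans (add_assoc _ _ _)⟩
  refine ⟨H, shiftLift hF.homeomorph v, hHc, hHe, ?_⟩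
  simpa only [add_sub_cancel_right] using hdrift.shift hHe v

end DriftLift

section Recurrence

theorem mul_measureReal_le_of_card_visits_le {X : Type*} [MeasurableSpace X] {μ : Measure X}
    [IsFiniteMeasure μ] {q : X → X} (hq : MeasurePreserving q μ μ) {U : Set X}
    [DecidablePred (· ∈ U)] (hU : MeasurableSet U) {N : ℕ} {M : ℝ}
    (hM : ∀ x, ((Finset.range N).filter fun k => q^[k] x ∈ U).card ≤ M) :
    N * μ.real U ≤ M * μ.real Set.univ := by
  have hmeas : ∀ k, MeasurableSet (q^[k] ⁻¹' U) := fun k => (hq.iterate k).measurable hU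
  have hintegrable : ∀ k, Integrable ((q^[k] ⁻¹' U).indicator (1 : X → ℝ)) μ := fun k =>
    (integrable_const 1).indicator (hmeas k)
  calc N * μ.real U = ∑ k ∈ Finset.range N, ∫ x, (q^[k] ⁻¹' U).indicator 1 x ∂μ := by
        simp only [integral_indicator_one (hmeas _),
          (hq.iterate _).measureReal_preimage hU.nullMeasurableSet, Finset.sum_const,
          Finset.card_range, nsmul_eq_mul]
    _ = ∫ x, ∑ k ∈ Finset.range N, (q^[k] ⁻¹' U).indicator 1 x ∂μ :=
        (integral_finsetSum _ fun k _ => hintegrable k).symm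
    _ ≤ ∫ _, M ∂μ := by
        refine integral_mono (integrable_finsetSum _ fun k _ => hintegrable k) (integrable_const M)
          fun x => ?_
        have hvisit : ∀ k, (q^[k] ⁻¹' U).indicator (1 : X → ℝ) x = if q^[k] x ∈ U then 1 else 0 :=
          fun k => by by_cases h : q^[k] x ∈ U <;> simp [h]
        simpa only [hvisit, Finset.sum_boole] using hM x
    _ = M * μ.real Set.univ := by rw [integral_const, smul_eq_mul, mul_comm]

instance isProbabilityMeasure_volume_T2 : IsProbabilityMeasure (volume : Measure T2) where
  measure_univ := by
    rw [Measure.volume_eq_prod, ← Set.univ_prod_univ, Measure.prod_prod, AddCircle.measure_univ,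
      ENNReal.ofReal_one, one_mul]

theorem ball_pr2_subset (z : R2) (r : ℝ) : Metric.ball (pr2 z) r ⊆ pr2 '' Metric.ball z r := by
  have hlift : ∀ (a : ℝ) (x : AddCircle (1 : ℝ)), x ∈ Metric.ball (a : AddCircle (1 : ℝ)) r →
      ∃ b ∈ Metric.ball a r, (b : AddCircle (1 : ℝ)) = x := by
    intro a x hx
    obtain ⟨m, hm, hmr⟩ := QuotientAddGroup.norm_lt_iff.1 (mem_ball_iff_norm.1 hx)
    refine ⟨a + m, by rwa [mem_ball_iff_norm, add_sub_cancel_left], ?_⟩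
    rw [AddCircle.coe_add, hm, add_sub_cancel]
  rintro ⟨x, y⟩ hxy
  rw [pr2, ← ball_prod_same] at hxy
  obtain ⟨b, hb, rfl⟩ := hlift _ _ hxy.1
  obtain ⟨c, hc, rfl⟩ := hlift _ _ hxy.2
  exact ⟨(b, c), by rw [← Prod.mk.eta (p := z), ← ball_prod_same]; exact ⟨hb, hc⟩, rfl⟩

theorem sq_le_volume_pr2_image_ball (z : R2) {r : ℝ} (hr : 0 < r) (hr1 : r ≤ 1) :
    r ^ 2 ≤ (volume : Measure T2).real (pr2 '' Metric.ball z r) := by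
  have hcircle : ∀ a : AddCircle (1 : ℝ), volume.real (Metric.closedBall a (r / 2)) = r := by
    intro a
    rw [measureReal_def, AddCircle.volume_closedBall, mul_div_cancel₀ r two_ne_zero,
      min_eq_right hr1, ENNReal.toReal_ofReal hr.le]
  calc r ^ 2 = volume.real (Metric.closedBall (pr2 z) (r / 2)) := by
        rw [pr2, ← closedBall_prod_same, Measure.volume_eq_prod, measureReal_prod_prod, hcircle,
          hcircle, sq]
    _ ≤ volume.real (pr2 '' Metric.ball z r) :=
        measureReal_mono ((Metric.closedBall_subset_ball (half_lt_self hr)).trans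
          (ball_pr2_subset z r))

theorem card_le_of_forall_abs_sub_le {S : Finset ℤ} {c R : ℝ} (hR : 0 ≤ R)
    (hS : ∀ k ∈ S, |c - k| ≤ R) : (S.card : ℝ) ≤ 2 * R + 1 := by
  have hsub : S ⊆ Finset.Icc ⌈c - R⌉ ⌊c + R⌋ := fun k hk => by
    have := abs_le.1 (hS k hk)
    exact Finset.mem_Icc.2 ⟨Int.ceil_le.2 (by linarith), Int.le_floor.2 (by linarith)⟩
  have hcard : (((⌊c + R⌋ + 1 - ⌈c - R⌉).toNat : ℤ) : ℝ) ≤ 2 * R + 1 := by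
    rw [Int.toNat_eq_max]
    push_cast
    exact max_le (by linarith [Int.le_ceil (c - R), Int.floor_le (c + R)]) (by linarith)
  refine (Nat.cast_le.2 (Finset.card_le_card hsub)).trans ?_
  rw [Int.card_Icc]
  exact_mod_cast hcard

theorem card_le_of_forall_norm_sub_intVec_le {S : Finset (ℤ × ℤ)} {c : R2} {R : ℝ} (hR : 0 ≤ R)
    (hS : ∀ v ∈ S, ‖c - intVec v‖ ≤ R) : (S.card : ℝ) ≤ (2 * R + 1) ^ 2 := by
  classical
  have hfst : ((S.image Prod.fst).card : ℝ) ≤ 2 * R + 1 :=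
    card_le_of_forall_abs_sub_le (c := c.1) hR <| Finset.forall_mem_image.2 fun v hv =>
      (norm_fst_le (c - intVec v)).trans (hS v hv)
  have hsnd : ((S.image Prod.snd).card : ℝ) ≤ 2 * R + 1 :=
    card_le_of_forall_abs_sub_le (c := c.2) hR <| Finset.forall_mem_image.2 fun v hv =>
      (norm_snd_le (c - intVec v)).trans (hS v hv)
  calc (S.card : ℝ) ≤ (S.image Prod.fst).card * (S.image Prod.snd).card := by
        rw [← Nat.cast_mul, ← Finset.card_product]
        exact Nat.cast_le.2 (Finset.card_le_card Finset.subset_product)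
    _ ≤ (2 * R + 1) ^ 2 := by
        rw [sq]
        exact mul_le_mul hfst hsnd (Nat.cast_nonneg _) (by linarith)

theorem IsLift.exists_sub_intVec_mem {F : R2 → R2} {f : T2 → T2} (hF : IsLift F f)
    (hFe : Equivariant F) {D : Set R2} {x : R2} (hx : f (pr2 x) ∈ pr2 '' D) :
    ∃ v, F (x - intVec v) ∈ D := by
  obtain ⟨d, hd, hdx⟩ := hx
  rw [← hF, eq_comm, pr2_eq_iff] at hdx
  obtain ⟨v, hv⟩ := hdx
  exact ⟨v, by rwa [hFe.sub_intVec, hv, add_sub_cancel_right]⟩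

namespace IsDriftLift

variable {H : R2 → R2} {C : ℝ} {Q : R2 ≃ₜ R2} {q : T2 → T2} {δ z : R2} {r : ℝ}

theorem norm_sub_le_of_pow_mem_ball (hH : ∀ z, ‖H z - z‖ ≤ C) (hQ : IsDriftLift H Q q δ)
    {k : ℕ} (hk : k * ‖δ‖ ≤ 1) (hr1 : r ≤ 1) {y : R2}
    (hy : (Q ^ k : R2 ≃ₜ R2) y ∈ Metric.ball z r) : ‖y - z‖ ≤ 2 * C + 2 := by
  have hdrift := hasBoundedDrift_of_semiconj hH hQ.semiconj k y
  rw [zpow_natCast, Int.cast_natCast] at hdrift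
  calc ‖y - z‖ = ‖((Q ^ k : R2 ≃ₜ R2) y - z) - ((Q ^ k : R2 ≃ₜ R2) y - y - (k : ℝ) • δ)
        - (k : ℝ) • δ‖ := by congr 1; abel
    _ ≤ 1 + 2 * C + 1 := by
        refine norm_sub_le_of_le (norm_sub_le_of_le ?_ hdrift) ?_
        · exact (mem_ball_iff_norm.1 hy).le.trans hr1
        · rwa [norm_smul, Real.norm_natCast]
    _ = 2 * C + 2 := by ring

/-- A free ball has no return times at all, so visits of one orbit at different times come from
different deck translates, and only boundedly many translates are within reach. -/
theorem card_visits_ball_le [DecidablePred (· ∈ pr2 '' Metric.ball z r)]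
    (hH : ∀ z, ‖H z - z‖ ≤ C) (hQ : IsDriftLift H Q q δ) (hδ : δ ≠ 0) (hr : 0 < r) (hr1 : r ≤ 1)
    (hfree : 1 ∉ returnTimes Q (Metric.ball z r)) {N : ℕ} (hN : N * ‖δ‖ ≤ 1) (x : T2) :
    ((Finset.range N).filter fun k => q^[k] x ∈ pr2 '' Metric.ball z r).card
      ≤ (4 * C + 5) ^ 2 := by
  have hC : 0 ≤ C := (norm_nonneg _).trans (hH 0)
  obtain ⟨x, rfl⟩ := isOpenQuotientMap_pr2.surjective x
  set S := (Finset.range N).filter fun k => q^[k] (pr2 x) ∈ pr2 '' Metric.ball z r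
  have hvisit : ∀ k ∈ S, ∃ v, (Q ^ k : R2 ≃ₜ R2) (x - intVec v) ∈ Metric.ball z r :=
    fun k hk => (hQ.pow k).isLift.exists_sub_intVec_mem (hQ.pow k).equivariant
      (Finset.mem_filter.1 hk).2
  choose! v hv using hvisit
  have hinj : Set.InjOn v S := by
    intro k hk k' hk' hkk'
    by_contra hne
    refine hfree ((hasBoundedDrift_of_semiconj hH hQ.semiconj).one_mem_returnTimes hδ
      ((convex_ball z r).isPathConnected ⟨z, Metric.mem_ball_self hr⟩)
      (n := k' - k) (by omega) ⟨_, hv k hk, ?_⟩)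
    rw [← zpow_natCast, zpow_apply_zpow_apply, sub_add_cancel, zpow_natCast, hkk']
    exact hv k' hk'
  have hnear : ∀ u ∈ S.image v, ‖(x - z) - intVec u‖ ≤ 2 * C + 2 := by
    refine Finset.forall_mem_image.2 fun k hk => ?_
    rw [sub_right_comm]
    refine hQ.norm_sub_le_of_pow_mem_ball hH (hN.trans' ?_) hr1 (hv k hk)
    gcongr
    exact (Finset.mem_range.1 (Finset.mem_filter.1 hk).1).le
  calc (S.card : ℝ) = (S.image v).card := by rw [Finset.card_image_of_injOn hinj]
    _ ≤ (2 * (2 * C + 2) + 1) ^ 2 := card_le_of_forall_norm_sub_intVec_le (by positivity) hnear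
    _ = (4 * C + 5) ^ 2 := by ring

theorem exists_apply_mem_ball (hH : ∀ z, ‖H z - z‖ ≤ C) (hQ : IsDriftLift H Q q δ)
    (hq : MeasurePreserving q (volume : Measure T2) volume) (hδ : δ ≠ 0) (z : R2) (hr : 0 < r)
    (hr1 : r ≤ 1) (hδr : 2 * (4 * C + 5) ^ 2 * ‖δ‖ < r ^ 2) :
    ∃ y ∈ Metric.ball z r, Q y ∈ Metric.ball z r := by
  classical
  by_contra! hfree
  have hfree' : 1 ∉ returnTimes Q (Metric.ball z r) := by
    rintro ⟨y, hy, hy'⟩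
    exact hfree y hy (by rwa [zpow_one] at hy')
  have hC : 0 ≤ C := (norm_nonneg _).trans (hH 0)
  have hδ0 : 0 < ‖δ‖ := norm_pos_iff.2 hδ
  have hδ1 : ‖δ‖ ≤ 1 := by nlinarith
  set N := ⌊‖δ‖⁻¹⌋₊
  have hN : N * ‖δ‖ ≤ 1 := by
    rw [← le_div_iff₀ hδ0, one_div]
    exact Nat.floor_le (by positivity)
  have hN2 : ‖δ‖⁻¹ < 2 * N := by
    linarith [Nat.div_two_lt_floor ((one_le_inv₀ hδ0).2 hδ1)]
  have hvisits := mul_measureReal_le_of_card_visits_le hq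
    (isOpenQuotientMap_pr2.isOpenMap _ Metric.isOpen_ball).measurableSet
    (hQ.card_visits_ball_le hH hδ hr hr1 hfree' hN)
  rw [probReal_univ, mul_one] at hvisits
  refine hδr.not_ge ?_
  calc r ^ 2 = ‖δ‖⁻¹ * r ^ 2 * ‖δ‖ := by field_simp
    _ ≤ 2 * N * r ^ 2 * ‖δ‖ := by gcongr
    _ = 2 * (N * r ^ 2) * ‖δ‖ := by ring
    _ ≤ 2 * (4 * C + 5) ^ 2 * ‖δ‖ := by
        gcongr
        exact (mul_le_mul_of_nonneg_left (sq_le_volume_pr2_image_ball z hr hr1)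
          (Nat.cast_nonneg N)).trans hvisits

end IsDriftLift

end Recurrence

section Arithmetic

theorem norm_le_enorm2 (v : R2) : ‖v‖ ≤ enorm2 v :=
  max_le (Real.abs_le_sqrt (by nlinarith)) (Real.abs_le_sqrt (by nlinarith))

theorem TotallyIrrationalVec.smul_sub_intVec_ne_zero {ω : R2} (hω : TotallyIrrationalVec ω)
    {n : ℕ} (hn : n ≠ 0) (p : ℤ × ℤ) : (n : ℝ) • ω - intVec p ≠ 0 := by
  intro h
  have hfst : (n : ℝ) * ω.1 - p.1 = 0 := congrArg Prod.fst h
  obtain ⟨hn0, -, -⟩ := hω n 0 (-p.1) (by push_cast; linear_combination hfst)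
  exact hn (by exact_mod_cast hn0)

theorem TotallyIrrationalVec.smul_eq_smul_of_det2_eq_zero {ω : R2} (hω : TotallyIrrationalVec ω)
    {n n' : ℕ} {p p' : ℤ × ℤ}
    (h : det2 ((n : ℝ) • ω - intVec p) ((n' : ℝ) • ω - intVec p') = 0) :
    (n' : ℝ) • ((n : ℝ) • ω - intVec p) = (n : ℝ) • ((n' : ℝ) • ω - intVec p') := by
  simp only [det2_apply, Prod.fst_sub, Prod.snd_sub, Prod.smul_fst, Prod.smul_snd, smul_eq_mul,
    intVec] at h
  obtain ⟨hsnd, hfst, -⟩ := hω (n' * p.2 - n * p'.2) (n * p'.1 - n' * p.1)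
    (p.1 * p'.2 - p.2 * p'.1) (by push_cast; linear_combination h)
  rify at hsnd hfst
  refine Prod.ext ?_ ?_ <;>
    simp only [Prod.fst_sub, Prod.snd_sub, Prod.smul_fst, Prod.smul_snd, smul_eq_mul, intVec]
  · linear_combination hfst
  · linear_combination -hsnd

theorem SuperLiouville.exists_norm_smul_sub_intVec_lt_pow {ω : R2} (hω : SuperLiouville ω) {a : ℝ}
    (ha : 0 < a) : ∃ n : ℕ, n ≠ 0 ∧ ∃ p, ‖(n : ℝ) • ω - intVec p‖ < a ^ n := by
  obtain ⟨n, hlog, hn⟩ := ((hω (Real.log a)).and_eventually (eventually_ne_atTop 0)).exists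
  have hlog' : Real.log (normT2 ((n : ℝ) • ω)) < Real.log (a ^ n) := by
    rwa [inv_mul_lt_iff₀ (by positivity), ← Real.log_pow] at hlog
  have hnonneg : 0 ≤ normT2 ((n : ℝ) • ω) := Real.iInf_nonneg fun _ => Real.sqrt_nonneg _
  have hlt : normT2 ((n : ℝ) • ω) < a ^ n := by
    rcases hnonneg.eq_or_lt with hzero | hpos
    · rw [← hzero]
      positivity
    · exact (Real.log_lt_log_iff hpos (by positivity)).1 hlog'
  obtain ⟨p, hp⟩ := exists_lt_of_ciInf_lt hlt
  exact ⟨n, hn, p, (norm_le_enorm2 _).trans_lt hp⟩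

end Arithmetic

section Rigidity

/-- `C⁰`-rigidity of a lift `F` with drift `ω`: up to an integer translation, some positive iterate
of `F` is uniformly close to the identity, and its drift is small. -/
def IsRigidLift (F : R2 ≃ₜ R2) (ω : R2) : Prop :=
  ∀ ε > 0, ∃ n : ℕ, n ≠ 0 ∧ ∃ p, ‖(n : ℝ) • ω - intVec p‖ < ε ∧
    ∀ z, dist (shiftLift (F ^ n) p z) z < ε

theorem IsRigidLift.exists_det2_ne_zero {F : R2 ≃ₜ R2} {ω : R2} (hF : IsRigidLift F ω)
    (hω : TotallyIrrationalVec ω) {ε : ℝ} (hε : 0 < ε) : ∃ (n n' : ℕ) (p p' : ℤ × ℤ),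
      det2 ((n : ℝ) • ω - intVec p) ((n' : ℝ) • ω - intVec p') ≠ 0 ∧
      (∀ z, dist (shiftLift (F ^ n) p z) z < ε) ∧ ∀ z, dist (shiftLift (F ^ n') p' z) z < ε := by
  obtain ⟨n, hn, p, -, hp⟩ := hF ε hε
  set δ := (n : ℝ) • ω - intVec p
  have hδ : 0 < ‖δ‖ := norm_pos_iff.2 (hω.smul_sub_intVec_ne_zero hn p)
  obtain ⟨n', hn', p', hδ', hp'⟩ := hF (min ε (‖δ‖ / n)) (by positivity)
  refine ⟨n, n', p, p', fun hpar => ?_, hp, fun z => (hp' z).trans_le (min_le_left _ _)⟩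
  have hlt := (lt_div_iff₀' (by positivity)).1 (hδ'.trans_le (min_le_right _ _))
  refine hlt.not_ge ?_
  calc ‖δ‖ ≤ n' * ‖δ‖ :=
        le_mul_of_one_le_left hδ.le (Nat.one_le_cast.2 (Nat.one_le_iff_ne_zero.2 hn'))
    _ = n * ‖(n' : ℝ) • ω - intVec p'‖ := by
        have hnorm := congrArg norm (hω.smul_eq_smul_of_det2_eq_zero hpar)
        rwa [norm_smul, norm_smul, Real.norm_natCast, Real.norm_natCast] at hnorm

theorem lipschitzWith_shiftLift_pow {F : R2 ≃ₜ R2} {K : NNReal} (hF : LipschitzWith K F) (n : ℕ)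
    (p : ℤ × ℤ) : LipschitzWith (K ^ n) (shiftLift (F ^ n) p) := by
  have hpow : LipschitzWith (K ^ n) (F ^ n : R2 ≃ₜ R2) := by
    induction n with
    | zero => exact LipschitzWith.id
    | succ n ih => exact pow_succ K n ▸ pow_succ F n ▸ ih.comp hF
  exact LipschitzWith.of_dist_le_mul fun x y => by
    simpa only [shiftLift_apply, dist_sub_right] using hpow.dist_le_mul x y

theorem apply_zpow_eq_of_invariant {Y X : Type*} [TopologicalSpace Y] {Q : Y ≃ₜ Y} {ψ : Y → X}
    (hψ : ∀ z, ψ (Q z) = ψ z) (n : ℤ) (z : Y) : ψ ((Q ^ n : Y ≃ₜ Y) z) = ψ z := by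
  induction n using Int.induction_on generalizing z with
  | zero => rfl
  | succ i ih => rw [zpow_add_one, Homeomorph.mul_apply, ih, hψ]
  | pred i ih =>
    rw [← hψ, ← Homeomorph.mul_apply, ← zpow_one_add, add_sub_cancel, ih]

theorem HasBoundedDrift.exists_isQuasiLine_dist_lt {E X : Type*} [NormedAddCommGroup E]
    [NormedSpace ℝ E] [PseudoMetricSpace X] {P : E ≃ₜ E} {δ : E} {B : ℝ}
    (hP : HasBoundedDrift P δ B) {ψ : E → X} (hψ : ∀ z, ψ (P z) = ψ z) {d ε : ℝ}
    (hd : ∀ ⦃a b⦄, dist a b < d → dist (ψ a) (ψ b) < ε) {x : E} (hx : dist (P x) x < d) :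
    ∃ l, IsQuasiLine l δ ∧ ∀ t, dist (ψ (l t)) (ψ x) < ε := by
  refine ⟨orbitLine P (Path.segment x (P x)), hP.isQuasiLine_orbitLine _, fun t => ?_⟩
  rw [orbitLine, apply_zpow_eq_of_invariant hψ]
  have hsegment : Set.range (Path.segment x (P x)) ⊆ Metric.ball x d := by
    rw [Path.range_segment]
    exact (convex_ball x d).segment_subset (Metric.mem_ball_self (dist_nonneg.trans_lt hx)) hx
  rw [← Path.extend_range] at hsegment
  exact hd (hsegment ⟨_, rfl⟩)

namespace IsDriftLift

variable {H : R2 → R2} {C : ℝ} {F Q : R2 ≃ₜ R2} {f q : T2 → T2} {ω δ : R2}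

theorem dist_apply_self_lt (hH : ∀ z, ‖H z - z‖ ≤ C) (hQ : IsDriftLift H Q q δ)
    (hq : MeasurePreserving q (volume : Measure T2) volume) (hδ : δ ≠ 0) {K : NNReal}
    (hK : LipschitzWith K Q) {r : ℝ} (hr : 0 < r) (hr1 : r ≤ 1)
    (hδr : 2 * (4 * C + 5) ^ 2 * ‖δ‖ < r ^ 2) (z : R2) : dist (Q z) z < (K + 1) * r := by
  obtain ⟨y, hy, hQy⟩ := hQ.exists_apply_mem_ball hH hq hδ z hr hr1 hδr
  calc dist (Q z) z ≤ dist (Q z) (Q y) + dist (Q y) z := dist_triangle _ _ _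
    _ ≤ K * dist z y + dist (Q y) z := by gcongr; exact hK.dist_le_mul z y
    _ < K * r + r :=
        add_lt_add_of_le_of_lt (by gcongr; exact (Metric.mem_ball'.1 hy).le) hQy
    _ = (K + 1) * r := by ring

/-- The displacement of `F ^ n - p` is of order `L ^ n` times the square root of its drift, which a
super-Liouvillean drift makes small. -/
theorem isRigidLift (hHe : Equivariant H) (hH : ∀ z, ‖H z - z‖ ≤ C) (hF : IsDriftLift H F f ω)
    (hf : MeasurePreserving f (volume : Measure T2) volume) {K : NNReal} (hK : LipschitzWith K F)
    (hti : TotallyIrrationalVec ω) (hsl : SuperLiouville ω) : IsRigidLift F ω := by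
  intro ε hε
  have hC : 0 ≤ C := (norm_nonneg _).trans (hH 0)
  obtain ⟨L, hKL, hL⟩ : ∃ L : NNReal, K ≤ L ∧ 1 ≤ L := ⟨max K 1, le_max_left _ _, le_max_right _ _⟩
  set B := 2 * (4 * C + 5) ^ 2 with hB
  have hB1 : 1 ≤ B := by nlinarith
  set η := min (ε / 2) 1
  have hη : 0 < η := by positivity
  have hη1 : η ≤ 1 := min_le_right _ _
  have hηε : η ≤ ε / 2 := min_le_left _ _
  have hηB : η ^ 2 / B ≤ η := (div_le_self (sq_nonneg η) hB1).trans (by nlinarith)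
  obtain ⟨n, hn, p, hp⟩ := hsl.exists_norm_smul_sub_intVec_lt_pow
    (a := η ^ 2 / B / (L : ℝ) ^ 2) (by positivity)
  have hLn : (1 : ℝ) ≤ (L : ℝ) ^ n := one_le_pow₀ (by exact_mod_cast hL)
  have hp' : ‖(n : ℝ) • ω - intVec p‖ < η ^ 2 / B / ((L : ℝ) ^ n) ^ 2 := by
    refine hp.trans_le ?_
    rw [div_pow, ← pow_mul, ← pow_mul, mul_comm 2 n]
    gcongr
    exact pow_le_of_le_one (by positivity) (hηB.trans hη1) hn
  have hsmall : ‖(n : ℝ) • ω - intVec p‖ < ε :=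
    calc ‖(n : ℝ) • ω - intVec p‖ < η ^ 2 / B / ((L : ℝ) ^ n) ^ 2 := hp'
      _ ≤ η ^ 2 / B := div_le_self (by positivity) (one_le_pow₀ hLn)
      _ ≤ ε := by linarith
  refine ⟨n, hn, p, hsmall, fun z => ?_⟩
  calc dist (shiftLift (F ^ n) p z) z < (↑(L ^ n) + 1) * (η / (L : ℝ) ^ n) := by
        refine ((hF.pow n).shift hHe p).dist_apply_self_lt hH (hf.iterate n)
          (hti.smul_sub_intVec_ne_zero hn p) (lipschitzWith_shiftLift_pow (hK.weaken hKL) n p)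
          (by positivity) ((div_le_self hη.le hLn).trans hη1) ?_ z
        rw [← hB, div_pow, mul_comm, ← lt_div_iff₀ (by positivity), div_right_comm]
        exact hp'
    _ ≤ ε := by
        rw [NNReal.coe_pow, ← mul_div_assoc, div_le_iff₀ (by positivity)]
        nlinarith

/-- Quasi-lines of different directions along which `ψ` is almost constant cross. -/
theorem eq_of_invariant (hHe : Equivariant H) (hH : ∀ z, ‖H z - z‖ ≤ C)
    (hF : IsDriftLift H F f ω) (hrigid : IsRigidLift F ω) (hti : TotallyIrrationalVec ω)
    {X : Type*} [MetricSpace X] {ψ : R2 → X} (hψ : Continuous ψ)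
    (hper : ∀ v, Function.Periodic ψ (intVec v)) (hψF : ∀ z, ψ (F z) = ψ z) (x x' : R2) :
    ψ x = ψ x' := by
  refine eq_of_forall_dist_le fun ε hε => ?_
  obtain ⟨d, hd, hψd⟩ :=
    Metric.uniformContinuous_iff.1 (uniformContinuous_of_periodic hψ hper) (ε / 2) (half_pos hε)
  have hline : ∀ (n : ℕ) p y, dist (shiftLift (F ^ n) p y) y < d →
      ∃ l, IsQuasiLine l ((n : ℝ) • ω - intVec p) ∧ ∀ t, dist (ψ (l t)) (ψ y) < ε / 2 := by
    intro n p y hy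
    refine (hasBoundedDrift_of_semiconj hH ((hF.pow n).shift hHe p).semiconj
      ).exists_isQuasiLine_dist_lt (fun z => ?_) hψd hy
    rw [shiftLift_apply, (hper p).sub_eq, ← zpow_natCast, apply_zpow_eq_of_invariant hψF]
  obtain ⟨n, n', p, p', hdet, hP, hP'⟩ := hrigid.exists_det2_ne_zero hti hd
  obtain ⟨l, hl, hlψ⟩ := hline n p x (hP x)
  obtain ⟨l', hl', hlψ'⟩ := hline n' p' x' (hP' x')
  obtain ⟨s, t, hst⟩ := hl.exists_eq_of_det2_ne_zero hl' hdet
  calc dist (ψ x) (ψ x') ≤ dist (ψ (l s)) (ψ x) + dist (ψ (l s)) (ψ x') :=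
        dist_triangle_left _ _ _
    _ ≤ ε / 2 + ε / 2 := add_le_add (hlψ s).le (hst ▸ hlψ' t).le
    _ = ε := add_halves ε

end IsDriftLift

end Rigidity

section Centralizer

theorem eq_zero_of_semiconj_add_of_norm_le {E : Type*} [NormedAddCommGroup E] [NormedSpace ℝ E]
    {Q : E ≃ₜ E} {ψ : E → E} {δ : E} {B : ℝ} (hψ : ∀ z, ψ (Q z) = ψ z + δ)
    (hB : ∀ z, ‖ψ z‖ ≤ B) : δ = 0 :=
  eq_zero_of_forall_norm_smul_le (B := B + B) fun n => by
    have h := semiconj_add_zpow hψ n 0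
    rw [Int.cast_natCast, ← sub_eq_iff_eq_add'] at h
    exact h ▸ norm_sub_le_of_le (hB _) (hB _)

namespace IsDriftLift

variable {H : R2 → R2} {C : ℝ} {F G : R2 ≃ₜ R2} {f g : T2 → T2} {ω c : R2}

theorem sub_apply_eq_of_commute (hHc : Continuous H) (hHe : Equivariant H)
    (hF : IsDriftLift H F f ω) (hG : IsLift G g) (hGe : Equivariant G) (hfg : g ∘ f = f ∘ g)
    (z : R2) : H (G (F z)) - H (F z) = H (G z) - H z := by
  obtain ⟨v, hv⟩ := (hF.isLift.comp hG).exists_eq_add_intVec (F.continuous.comp G.continuous)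
    (G.continuous.comp F.continuous) (hfg ▸ hG.comp hF.isLift)
  simp only [Function.comp_apply] at hv
  have hψF : ∀ z, H (G (F z)) - H (F z) = H (G z) - H z + intVec v := fun z => by
    rw [hv, hHe, hF.semiconj, hF.semiconj]
    abel
  obtain ⟨B, hB⟩ := exists_norm_le_of_periodic (η := fun z => H (G z) - H z) (by fun_prop)
    fun v z => by simp only [hGe z v, hHe _ v, add_sub_add_right_eq_sub]
  rw [hψF, eq_zero_of_semiconj_add_of_norm_le hψF hB, add_zero]

theorem exists_isDriftLift_of_commute (hHc : Continuous H) (hHe : Equivariant H)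
    (hH : ∀ z, ‖H z - z‖ ≤ C) (hF : IsDriftLift H F f ω) (hrigid : IsRigidLift F ω)
    (hti : TotallyIrrationalVec ω) (hG : IsLift G g) (hGe : Equivariant G)
    (hfg : g ∘ f = f ∘ g) : ∃ c, IsDriftLift H G g c := by
  have hconst := hF.eq_of_invariant hHe hH hrigid hti (ψ := fun z => H (G z) - H z) (by fun_prop)
    (fun v z => by simp only [hGe z v, hHe _ v, add_sub_add_right_eq_sub])
    (hF.sub_apply_eq_of_commute hHc hHe hG hGe hfg)
  exact ⟨H (G 0) - H 0, hG, hGe, fun z => eq_add_of_sub_eq' (hconst z 0)⟩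

/-- The displacement of `G` differs from `c` by a coboundary, which integrates to zero. -/
theorem isRotOf_eq (hHc : Continuous H) (hHe : Equivariant H) (hG : IsDriftLift H G g c)
    (hg : MeasurePreserving g (volume : Measure T2) volume) {u : T2} (hu : IsRotOf g u) :
    u = pr2 c := by
  obtain ⟨G₀, Φ, hG₀c, hG₀, -, hΦ, rfl⟩ := hu
  obtain ⟨v, hv⟩ := hG.isLift.exists_eq_add_intVec G.continuous hG₀c hG₀
  obtain ⟨φ, hφ, hφH⟩ := exists_continuous_descent (η := fun z => H z - z) (by fun_prop)
    hHe.periodic_sub_self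
  have hcob : ∀ x, Φ x = (c + intVec v) - (φ (g x) - φ x) := by
    refine isOpenQuotientMap_pr2.surjective.forall.2 fun z => ?_
    rw [hΦ, hv, ← hG.isLift, hφH, hφH, hG.semiconj]
    abel
  have hintegrable : Integrable φ (volume : Measure T2) :=
    hφ.integrable_of_hasCompactSupport (HasCompactSupport.of_compactSpace φ)
  have hintg : Integrable (fun x => φ (g x)) (volume : Measure T2) :=
    hg.integrable_comp_of_integrable hintegrable
  have hsame : ∫ x, φ (g x) = ∫ x, φ x := by
    conv_rhs => rw [← hg.map_eq]
    exact (integral_map hg.measurable.aemeasurable hφ.aestronglyMeasurable).symm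
  have hmean : ∫ x, Φ x = c + intVec v := by
    have hcobint : Integrable (fun x => φ (g x) - φ x) volume := hintg.sub hintegrable
    simp only [hcob]
    rw [integral_sub (integrable_const _) hcobint, integral_sub hintg hintegrable, hsame, sub_self,
      sub_zero, integral_const, probReal_univ, one_smul]
  rw [hmean]
  exact pr2_eq_iff.2 ⟨v, rfl⟩

/-- `P * G`, for an iterate `P` of `F` close to the identity, has a small nonzero drift, so it
cannot move any ball off itself. -/
theorem apply_eq_self_of_drift_eq_zero (hHe : Equivariant H) (hH : ∀ z, ‖H z - z‖ ≤ C)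
    (hF : IsDriftLift H F f ω) (hrigid : IsRigidLift F ω) (hti : TotallyIrrationalVec ω)
    (hf : MeasurePreserving f (volume : Measure T2) volume) (hG : IsDriftLift H G g 0)
    (hg : MeasurePreserving g (volume : Measure T2) volume) (z : R2) : G z = z := by
  refine eq_of_forall_dist_le fun ε hε => ?_
  have hC : 0 ≤ C := (norm_nonneg _).trans (hH 0)
  obtain ⟨d, hd, hGd⟩ := Metric.continuous_iff.1 G.continuous z (ε / 3) (by positivity)
  set r := min d (min (ε / 3) 1)
  have hr : 0 < r := by positivity
  have hrd : r ≤ d := min_le_left _ _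
  have hrε : r ≤ ε / 3 := (min_le_right _ _).trans (min_le_left _ _)
  have hr1 : r ≤ 1 := (min_le_right _ _).trans (min_le_right _ _)
  set B := 2 * (4 * C + 5) ^ 2
  obtain ⟨n, hn, p, hδ, hP⟩ := hrigid (min (ε / 3) (r ^ 2 / B)) (by positivity)
  set P := shiftLift (F ^ n) p
  have hPG : IsDriftLift H (P * G) (f^[n] ∘ g) ((n : ℝ) • ω - intVec p) := by
    simpa only [add_zero] using ((hF.pow n).shift hHe p).mul hG
  obtain ⟨y, hy, hPGy⟩ := hPG.exists_apply_mem_ball hH ((hf.iterate n).comp hg)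
    (hti.smul_sub_intVec_ne_zero hn p) z hr hr1
    ((lt_div_iff₀' (by positivity)).1 (hδ.trans_le (min_le_right _ _)))
  calc dist (G z) z ≤ dist (G z) (G y) + dist (G y) (P (G y)) + dist (P (G y)) z :=
        dist_triangle4 _ _ _ _
    _ ≤ ε / 3 + ε / 3 + ε / 3 := by
        gcongr
        · rw [dist_comm]
          exact (hGd y (hy.trans_le hrd)).le
        · rw [dist_comm]
          exact ((hP (G y)).trans_le (min_le_left _ _)).le
        · exact (Metric.mem_ball.1 hPGy).le.trans hrε
    _ = ε := by ring

end IsDriftLift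

end Centralizer

theorem centralizer_with_zero_rotation_vector_is_id_general {f g : T2 → T2} {ω : R2}
    (hti : TotallyIrrationalVec ω) (hsl : SuperLiouville ω) (hiso : IsotopicToId f)
    {F₀ : R2 → R2} {K : NNReal} (hF₀ : IsLift F₀ f) (hK : LipschitzWith K F₀)
    (hmp : MeasurePreserving f (volume : Measure T2) volume) (hsc : RegSemiConj f (pr2 ω))
    (hisog : IsotopicToId g) (hmpg : MeasurePreserving g (volume : Measure T2) volume)
    (hcomm : g ∘ f = f ∘ g) (hρ : IsRotOf g 0) : g = id := by
  obtain ⟨H, F, hHc, hHe, hF⟩ := hsc.exists_isDriftLift hiso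
  obtain ⟨C, hH⟩ := exists_norm_le_of_periodic (hHc.sub continuous_id) hHe.periodic_sub_self
  obtain ⟨u, hu⟩ := hF₀.exists_eq_add_intVec hK.continuous F.continuous hF.isLift
  have hFK : LipschitzWith K F :=
    LipschitzWith.of_dist_le_mul fun x y => by
      simpa only [hu, dist_add_right] using hK.dist_le_mul x y
  have hrigid := hF.isRigidLift hHe hH hmp hFK hti hsl
  obtain ⟨-, G₁, hG₁, hG₁l, hG₁e⟩ := hisog
  obtain ⟨c, hc⟩ := hF.exists_isDriftLift_of_commute hHc hHe hH hrigid hti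
    (G := hG₁.homeomorph) hG₁l hG₁e hcomm
  obtain ⟨m, rfl⟩ := pr2_eq_zero_iff.1 (hc.isRotOf_eq hHc hHe hmpg hρ).symm
  have hG : IsDriftLift H (shiftLift hG₁.homeomorph m) g 0 := sub_self (intVec m) ▸ hc.shift hHe m
  refine funext (isOpenQuotientMap_pr2.surjective.forall.2 fun z => ?_)
  rw [← hG.isLift, hF.apply_eq_self_of_drift_eq_zero hHe hH hrigid hti hmp hG hmpg, id]

/-- **Lemma 4.2.** Let f be a volume-preserving C^r (r ≥ 2, possibly r = ∞) diffeomorphism of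
𝕋², isotopic to the identity, regularly semi-conjugate to T_ω̄ with ω̄ totally irrational and
super-Liouvillean. If g is a volume-preserving C^{r−1} diffeomorphism of 𝕋², isotopic to the
identity, commuting with f and with rotation vector ρ(g) = 0, then g = Id. -/
theorem centralizer_with_zero_rotation_vector_is_id
    (r : ℕ∞) (hr : 2 ≤ r)
    (f g : T2 → T2) (ω : R2) (w : T2)
    (hw : pr2 ω = w)
    (hti : TotallyIrrationalVec ω)
    (hsl : SuperLiouville ω)
    (hiso : IsotopicToId f)
    (hcr : IsCrDiffeo r f)
    (hmp : MeasurePreserving f (volume : Measure T2) volume)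
    (hsc : RegSemiConj f w)
    (hisog : IsotopicToId g)
    (hcrg : IsCrDiffeo (r - 1) g)
    (hmpg : MeasurePreserving g (volume : Measure T2) volume)
    (hcomm : g ∘ f = f ∘ g)
    (hρ : IsRotOf g 0) :
    g = id := by
  subst hw
  obtain ⟨F₀, K, hF₀, hK⟩ := hcr.exists_lipschitzWith_lift (one_le_two.trans hr) hiso
  exact centralizer_with_zero_rotation_vector_is_id_general hti hsl hiso hF₀ hK hmp hsc hisog hmpg
    hcomm hρ
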